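/- arXiv:math/0701528 — 10 statements merged into one kernel-verified Lean document; each statement's English description precedes it below -/
import Mathlib

section
/- Let m ≥ 1, let γ_0 = 1 and γ_1, …, γ_m be positive integers with γ_0 | γ_1 | γ_2 | ⋯ | γ_m, and let f_1, …, f_{m+1} be arithmetic functions. Then for all complex s with Re(s) > max{σ(f_1), …, σ(f_{m+1})}, the Dirichlet series of the iterated γ-convolution factors as L(s; f_{m+1} *_{γ_m} ⋯ *_{γ_1} f_1) = ∏_{j=1}^{m+1} L(s; f_j^{[γ_{j-1}]}). -/
/-!
For `γ > 0` the `γ`-convolution `g *_γ f` is the ordinary Dirichlet convolution of `f` with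
`a_γ g` (`gconv_eq_convolution`), so its Dirichlet series is `L(s; f) L(s; a_γ g)`. To iterate, the
restriction `a_γ g` has to be computed when `g` is itself a convolution `h *_{γ'} f'`. Because
`γ ∣ γ'`, the quotient `n / d ^ γ'` is a `γ`-th power exactly when `n` is, whence
`a_γ (h *_{γ'} f') = h *_{γ'} (a_γ f')` (`aPow_mul_gconv`). Induction on the list of exponents then
gives the factorization of `L(s; a_δ · (f_{m+1} *_{γ_m} ⋯ *_{γ_1} f_1))` for every `δ ∣ γ_1`
(`LSeries_aPow_mul_gconvIter`), and the theorem is the case `δ = 1`.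
-/

open scoped BigOperators

/-- The γ-convolution `(g *_γ f)(n) = ∑_{d^γ ∣ n} f(n/d^γ) g(d^γ)`. -/
noncomputable def gconv (γ : ℕ) (g f : ℕ → ℂ) (n : ℕ) : ℂ :=
  ∑ d ∈ n.divisors.filter (fun d => d ^ γ ∣ n), f (n / d ^ γ) * g (d ^ γ)

/-- Iterated γ-convolution `f_{m+1} *_{γ_m} ⋯ *_{γ_1} f_1`, where
`γs = [γ_1, …, γ_m]` and `fs = [f_1, …, f_{m+1}]`:
it is defined inductively as `((f_{m+1} *_{γ_m} ⋯ *_{γ_2} f_2) *_{γ_1} f_1)`. -/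
noncomputable def gconvIter : List ℕ → List (ℕ → ℂ) → ℕ → ℂ
  | [], f :: _, n => f n
  | γ :: γs, f :: fs, n => gconv γ (gconvIter γs fs) f n
  | _, _, _ => 0

open Classical in
/-- `a_γ(n) = 1` if `n` is the γ-th power of a positive integer, `0` otherwise. -/
noncomputable def aPow (γ n : ℕ) : ℂ :=
  if ∃ d : ℕ, 0 < d ∧ n = d ^ γ then 1 else 0

/-- For `γ > 0`, `g *_γ f` is the Dirichlet convolution of `f` with `a_γ g`: the divisors of `n`
that are `γ`-th powers correspond to the `d` with `d ^ γ ∣ n`. -/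
lemma gconv_eq_convolution {γ : ℕ} (hγ : 0 < γ) (g f : ℕ → ℂ) {n : ℕ} (hn : n ≠ 0) :
    gconv γ g f n = LSeries.convolution f (fun k => aPow γ k * g k) n := by
  rw [LSeries.convolution_def]
  beta_reduce
  rw [Nat.sum_divisorsAntidiagonal' (f := fun a b => f a * (aPow γ b * g b))]
  unfold gconv
  refine Finset.sum_of_injOn (fun d => d ^ γ) ?_ ?_ ?_ ?_
  · intro a _ b _ h
    exact Nat.pow_left_injective hγ.ne' h
  · intro d hd
    simp only [Finset.coe_filter, Set.mem_setOf_eq] at hd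
    simpa using ⟨hd.2, hn⟩
  · intro k hk hk'
    rw [aPow, if_neg, zero_mul, mul_zero]
    rintro ⟨d, -, rfl⟩
    have hdvd := Nat.dvd_of_mem_divisors hk
    refine hk' ⟨d, ?_, rfl⟩
    simpa using ⟨⟨(dvd_pow_self d hγ.ne').trans hdvd, hn⟩, hdvd⟩
  · intro d hd
    have hd0 : 0 < d := Nat.pos_of_mem_divisors (Finset.mem_filter.1 hd).1
    have h1 : aPow γ (d ^ γ) = 1 := if_pos ⟨d, hd0, rfl⟩
    simp only [h1, one_mul]

/-- Dividing by a `γ`-th power, where `δ ∣ γ`, does not affect being a `δ`-th power. -/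
lemma aPow_div {δ γ : ℕ} (hδ : 0 < δ) (hdvd : δ ∣ γ) {d n : ℕ} (hd : 0 < d) (hn : n ≠ 0)
    (hdn : d ^ γ ∣ n) : aPow δ (n / d ^ γ) = aPow δ n := by
  obtain ⟨e, rfl⟩ := hdvd
  obtain ⟨k, rfl⟩ := hdn
  have hpos : 0 < d ^ (δ * e) := by positivity
  rw [Nat.mul_div_cancel_left k hpos]
  unfold aPow
  congr 1
  refine propext ⟨?_, ?_⟩
  · rintro ⟨c, hc, rfl⟩
    exact ⟨d ^ e * c, by positivity, by rw [mul_pow, ← pow_mul, mul_comm e δ]⟩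
  · rintro ⟨c, hc, h⟩
    have h1 : (d ^ e) ^ δ ∣ c ^ δ := ⟨k, by rw [← h, ← pow_mul, mul_comm e δ]⟩
    obtain ⟨b, rfl⟩ := (Nat.pow_dvd_pow_iff hδ.ne').1 h1
    refine ⟨b, Nat.pos_of_mul_pos_left hc, ?_⟩
    rw [mul_pow, ← pow_mul, mul_comm e δ] at h
    exact Nat.eq_of_mul_eq_mul_left hpos h

/-- If `δ ∣ γ`, then restricting `g *_γ f` to `δ`-th powers amounts to restricting `f`. -/
lemma aPow_mul_gconv {δ γ : ℕ} (hδ : 0 < δ) (hdvd : δ ∣ γ) (g f : ℕ → ℂ) {n : ℕ} (hn : n ≠ 0) :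
    aPow δ n * gconv γ g f n = gconv γ g (fun k => aPow δ k * f k) n := by
  unfold gconv
  rw [Finset.mul_sum]
  refine Finset.sum_congr rfl fun d hd => ?_
  rw [Finset.mem_filter] at hd
  beta_reduce
  rw [aPow_div hδ hdvd (Nat.pos_of_mem_divisors hd.1) hn hd.2, mul_assoc]

lemma LSeriesSummable_aPow_mul (γ : ℕ) {f : ℕ → ℂ} {s : ℂ} (hf : LSeriesSummable f s) :
    LSeriesSummable (fun n => aPow γ n * f n) s := by
  refine Summable.of_norm_bounded hf.norm fun n => LSeries.norm_term_le s ?_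
  unfold aPow
  split_ifs <;> simp

/-- The factorization for an arbitrary first exponent `δ`, with the iterated convolution restricted
to `δ`-th powers; summability is carried along because the product formula for Dirichlet series
needs it in the induction. -/
lemma LSeries_aPow_mul_gconvIter (s : ℂ) (γs : List ℕ) : ∀ (δ : ℕ) (fs : List (ℕ → ℂ)),
    0 < δ → (∀ γ ∈ γs, 0 < γ) → List.IsChain (· ∣ ·) (δ :: γs) → fs.length = γs.length + 1 →
    (∀ f ∈ fs, LSeriesSummable f s) →
    LSeriesSummable (fun n => aPow δ n * gconvIter γs fs n) s ∧
    LSeries (fun n => aPow δ n * gconvIter γs fs n) s =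
      (List.zipWith (fun γ f => LSeries (fun n => aPow γ n * f n) s) (δ :: γs) fs).prod := by
  induction γs with
  | nil =>
    intro δ fs hδ _ _ hlen hs
    match fs, hlen with
    | [f], _ =>
      simp only [gconvIter]
      exact ⟨LSeriesSummable_aPow_mul δ (hs f (by simp)), by simp⟩
  | cons γ γs ih =>
    intro δ fs hδ hpos hchain hlen hs
    match fs, hlen with
    | f :: fs, hlen =>
      rw [List.isChain_cons_cons] at hchain
      have hγ : 0 < γ := hpos γ (by simp)
      obtain ⟨hsum, heq⟩ := ih γ fs hγ (fun x hx => hpos x (by simp [hx])) hchain.2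
        (by simpa using hlen) (fun x hx => hs x (by simp [hx]))
      have hf : LSeriesSummable (fun n => aPow δ n * f n) s :=
        LSeriesSummable_aPow_mul δ (hs f (by simp))
      have key : ∀ {n : ℕ}, n ≠ 0 → aPow δ n * gconvIter (γ :: γs) (f :: fs) n =
          LSeries.convolution (fun k => aPow δ k * f k)
            (fun k => aPow γ k * gconvIter γs fs k) n := by
        intro n hn
        simp only [gconvIter]
        rw [aPow_mul_gconv hδ hchain.1 _ _ hn, gconv_eq_convolution hγ _ _ hn]
      refine ⟨(LSeriesSummable_congr s key).2 (hf.convolution hsum), ?_⟩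
      rw [LSeries_congr key s, LSeries_convolution' hf hsum, heq]
      simp

/-- Proposition 2.1: if `1 = γ_0 ∣ γ_1 ∣ ⋯ ∣ γ_m`, then for `Re s` larger than all
abscissas of absolute convergence,
`L(s; f_{m+1} *_{γ_m} ⋯ *_{γ_1} f_1) = ∏_{j=1}^{m+1} L(s; f_j^{[γ_{j-1}]})`. -/
theorem stmt_0 (m : ℕ) (hm : 1 ≤ m) (γs : List ℕ) (fs : List (ℕ → ℂ))
    (hγlen : γs.length = m) (hflen : fs.length = m + 1)
    (hγpos : ∀ γ ∈ γs, 0 < γ) (hchain : List.Chain (· ∣ ·) 1 γs)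
    (s : ℂ) (hs : ∀ f ∈ fs, LSeries.abscissaOfAbsConv f < (s.re : EReal)) :
    LSeries (gconvIter γs fs) s =
      (List.zipWith (fun γ f => LSeries (fun n => aPow γ n * f n) s) (1 :: γs) fs).prod := by
  have h := (LSeries_aPow_mul_gconvIter s γs 1 fs one_pos hγpos hchain (by omega)
    (fun f hf => LSeriesSummable_of_abscissaOfAbsConv_lt_re (hs f hf))).2
  rw [← h]
  refine LSeries_congr (fun {n} hn => ?_) s
  have h1 : aPow 1 n = 1 := if_pos ⟨n, Nat.pos_of_ne_zero hn, (pow_one n).symm⟩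
  rw [h1, one_mul]
end

section
/- Let m ≥ 1 and γ = (γ_1,…,γ_m) ∈ ℕ^m. If f_1,…,f_{m+1} are multiplicative arithmetic functions, then the (m+1)-variable function S^{(γ_1,…,γ_m)}_{f_1,…,f_{m+1}} is multiplicative: S^γ_f(m_1n_1,…,m_{m+1}n_{m+1}) = S^γ_f(m_1,…,m_{m+1}) · S^γ_f(n_1,…,n_{m+1}) whenever gcd(m_1⋯m_{m+1}, n_1⋯n_{m+1}) = 1. -/
/-!
The proof is by induction on the number of exponents. Coprimality gives
`gcd (m₁n₁) (m₂n₂) = gcd m₁ m₂ * gcd n₁ n₂`, with coprime factors `A` and `B`. Every `d ∣ A * B`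
with `d ^ γ ∣ A * B` factors uniquely as `d = a * b` with `a ∣ A`, `a ^ γ ∣ A`, `b ∣ B`, `b ^ γ ∣ B`,
so the outer sum for the product splits into a product of two sums as soon as its terms factor
(`sum_pow_dvd_mul`). The terms do factor: the first function is multiplicative, and the inner
sum at `(a * b) ^ γ = a ^ γ * b ^ γ` is handled by the induction hypothesis.
-/

open scoped BigOperators

/-- The multiple Ramanujan sum `S^{(γ_1,…,γ_m)}_{f_1,…,f_{m+1}}(n_1,…,n_{m+1})`,
where `γs = [γ_1,…,γ_m]`, `fs = [f_1,…,f_{m+1}]`, `ns = [n_1,…,n_{m+1}]`.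
Thanks to the convention `f(x) = 0` for non-integral `x`, the sum over the tuples
`(d_1,…,d_m)` with `d_j^{γ_j} ∣ gcd(n_1,…,n_{j+1})` collapses to the recursion
used here.  For `m = 0`, `S_f(n) = f(n)`. -/
noncomputable def mRam : List ℕ → List (ℕ → ℂ) → List ℕ → ℂ
  | [], f :: _, n :: _ => f n
  | γ :: γs, f :: fs, n₁ :: n₂ :: ns =>
      ∑ d ∈ (Nat.gcd n₁ n₂).divisors.filter (fun d => d ^ γ ∣ Nat.gcd n₁ n₂),
        f (n₁ / d ^ γ) * mRam γs fs (d ^ γ :: ns)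
  | _, _, _ => 0

/-- For coprime `A`, `B`, a sum over the `d ∣ A * B` with `d ^ γ ∣ A * B` whose terms factor along
`d = a * b` is a product of the corresponding sums for `A` and `B`. The inverse of
`(a, b) ↦ a * b` is `d ↦ (gcd d A, gcd d B)`. -/
lemma sum_pow_dvd_mul {A B : ℕ} (hA : 0 < A) (hB : 0 < B) (hAB : Nat.Coprime A B) (γ : ℕ)
    (F G H : ℕ → ℂ)
    (hF : ∀ a b, a ∣ A → a ^ γ ∣ A → b ∣ B → b ^ γ ∣ B → F (a * b) = G a * H b) :
    ∑ d ∈ (A * B).divisors.filter (fun d => d ^ γ ∣ A * B), F d =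
      (∑ a ∈ A.divisors.filter (fun d => d ^ γ ∣ A), G a) *
        ∑ b ∈ B.divisors.filter (fun d => d ^ γ ∣ B), H b := by
  rw [Finset.sum_mul_sum, ← Finset.sum_product']
  symm
  refine Finset.sum_nbij' (fun p => p.1 * p.2) (fun d => (Nat.gcd d A, Nat.gcd d B))
    ?_ ?_ ?_ ?_ ?_
  · rintro ⟨a, b⟩ h
    simp only [Finset.mem_product, Finset.mem_filter, Nat.mem_divisors] at h ⊢
    obtain ⟨⟨⟨h1, _⟩, h2⟩, ⟨h3, _⟩, h4⟩ := h
    refine ⟨⟨Nat.mul_dvd_mul h1 h3, by positivity⟩, ?_⟩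
    rw [mul_pow]
    exact Nat.mul_dvd_mul h2 h4
  · intro d h
    simp only [Finset.mem_product, Finset.mem_filter, Nat.mem_divisors] at h ⊢
    obtain ⟨⟨h1, _⟩, h2⟩ := h
    refine ⟨⟨⟨Nat.gcd_dvd_right _ _, hA.ne'⟩, ?_⟩, ⟨Nat.gcd_dvd_right _ _, hB.ne'⟩, ?_⟩
    -- `gcd d A ^ γ` divides `A * B` and is coprime to `B`; symmetrically for `gcd d B`.
    · exact (Nat.Coprime.pow_left γ
        (hAB.coprime_dvd_left (Nat.gcd_dvd_right d A))).dvd_of_dvd_mul_right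
        ((pow_dvd_pow_of_dvd (Nat.gcd_dvd_left d A) γ).trans h2)
    · exact (Nat.Coprime.pow_left γ
        (hAB.symm.coprime_dvd_left (Nat.gcd_dvd_right d B))).dvd_of_dvd_mul_left
        ((pow_dvd_pow_of_dvd (Nat.gcd_dvd_left d B) γ).trans h2)
  · rintro ⟨a, b⟩ h
    simp only [Finset.mem_product, Finset.mem_filter, Nat.mem_divisors] at h
    obtain ⟨⟨⟨h1, _⟩, h2⟩, ⟨h3, _⟩, h4⟩ := h
    have hbA : Nat.Coprime b A := hAB.symm.coprime_dvd_left h3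
    have haB : Nat.Coprime a B := hAB.coprime_dvd_left h1
    ext
    · simp only [hbA.gcd_mul_right_cancel, Nat.gcd_eq_left h1]
    · simp only [haB.gcd_mul_left_cancel, Nat.gcd_eq_left h3]
  · intro d h
    simp only [Finset.mem_filter, Nat.mem_divisors] at h
    simp only [← hAB.gcd_mul d, Nat.gcd_eq_left h.1.1]
  · rintro ⟨a, b⟩ h
    simp only [Finset.mem_product, Finset.mem_filter, Nat.mem_divisors] at h
    exact (hF a b h.1.1.1 h.1.2 h.2.1.1 h.2.2).symm

/-- The multiplicativity of `mRam`, including the degenerate case `m = 0`, where the induction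
starts. -/
lemma mRam_mul (γs : List ℕ) : ∀ (fs : List (ℕ → ℂ)), fs.length = γs.length + 1 →
    (∀ f ∈ fs, ∀ a b : ℕ, 0 < a → 0 < b → Nat.Coprime a b → f (a * b) = f a * f b) →
    ∀ ms ns : List ℕ, ms.length = γs.length + 1 → ns.length = γs.length + 1 →
    (∀ x ∈ ms, 0 < x) → (∀ x ∈ ns, 0 < x) → Nat.Coprime ms.prod ns.prod →
    mRam γs fs (List.zipWith (· * ·) ms ns) = mRam γs fs ms * mRam γs fs ns := by
  induction γs with
  | nil =>
    rintro (_ | ⟨f, fs⟩) hf hmult (_ | ⟨m, ms⟩) (_ | ⟨n, ns⟩) hms hns hmpos hnpos hcop <;>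
      simp at hf hms hns
    subst hf hms hns
    simp only [List.zipWith_cons_cons, mRam]
    exact hmult f (by simp) m n (hmpos m (by simp)) (hnpos n (by simp)) (by simpa using hcop)
  | cons γ γs ih =>
    rintro (_ | ⟨f, fs⟩) hf hmult (_ | ⟨m₁, _ | ⟨m₂, ms⟩⟩) (_ | ⟨n₁, _ | ⟨n₂, ns⟩⟩)
      hms hns hmpos hnpos hcop <;> simp at hf hms hns
    simp only [List.mem_cons, forall_eq_or_imp, List.prod_cons] at hmult hmpos hnpos hcop
    obtain ⟨hm₁, hm₂, hmpos⟩ := hmpos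
    obtain ⟨hn₁, hn₂, hnpos⟩ := hnpos
    obtain ⟨hf₁, hmult⟩ := hmult
    have cop : ∀ {x y : ℕ}, x ∣ m₁ * (m₂ * ms.prod) → y ∣ n₁ * (n₂ * ns.prod) →
        Nat.Coprime x y := fun hx hy => Nat.Coprime.of_dvd hx hy hcop
    have dm₁ : m₁ ∣ m₁ * (m₂ * ms.prod) := Dvd.intro _ rfl
    have dn₁ : n₁ ∣ n₁ * (n₂ * ns.prod) := Dvd.intro _ rfl
    have dm₂ : m₂ ∣ m₁ * (m₂ * ms.prod) := Dvd.intro (m₁ * ms.prod) (by ring)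
    have dn₂ : n₂ ∣ n₁ * (n₂ * ns.prod) := Dvd.intro (n₁ * ns.prod) (by ring)
    have hgcd : Nat.gcd (m₁ * n₁) (m₂ * n₂) = Nat.gcd m₁ m₂ * Nat.gcd n₁ n₂ := by
      rw [(cop dm₂ dn₂).gcd_mul, (cop dm₂ dn₁).symm.gcd_mul_right_cancel,
        (cop dm₁ dn₂).gcd_mul_left_cancel]
    simp only [List.zipWith_cons_cons, mRam, hgcd]
    refine sum_pow_dvd_mul (Nat.gcd_pos_of_pos_left _ hm₁) (Nat.gcd_pos_of_pos_left _ hn₁)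
      (cop ((Nat.gcd_dvd_left _ _).trans dm₁) ((Nat.gcd_dvd_left _ _).trans dn₁)) γ _ _ _ ?_
    intro a b _ ha _ hb
    have ha₁ : a ^ γ ∣ m₁ := ha.trans (Nat.gcd_dvd_left _ _)
    have hb₁ : b ^ γ ∣ n₁ := hb.trans (Nat.gcd_dvd_left _ _)
    have hapos := Nat.pos_of_dvd_of_pos ha₁ hm₁
    have hbpos := Nat.pos_of_dvd_of_pos hb₁ hn₁
    have key := ih fs (by omega) hmult (a ^ γ :: ms) (b ^ γ :: ns) (by simpa using hms)
      (by simpa using hns) (List.forall_mem_cons.2 ⟨hapos, hmpos⟩)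
      (List.forall_mem_cons.2 ⟨hbpos, hnpos⟩)
      (by
        simp only [List.prod_cons]
        exact cop (Nat.mul_dvd_mul ha₁ (Dvd.intro_left _ rfl))
          (Nat.mul_dvd_mul hb₁ (Dvd.intro_left _ rfl)))
    simp only [List.zipWith_cons_cons] at key
    rw [mul_pow, key, Nat.mul_div_mul_comm ha₁ hb₁,
      hf₁ _ _ (Nat.div_pos (Nat.le_of_dvd hm₁ ha₁) hapos)
        (Nat.div_pos (Nat.le_of_dvd hn₁ hb₁) hbpos)
        (cop ((Nat.div_dvd_of_dvd ha₁).trans dm₁) ((Nat.div_dvd_of_dvd hb₁).trans dn₁))]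
    ring

/-- Proposition 2.3: if `f_1,…,f_{m+1}` are multiplicative, then
`S^{(γ_1,…,γ_m)}_{f_1,…,f_{m+1}}` is multiplicative as an `(m+1)`-variable
arithmetic function: `S(m_1n_1,…,m_{m+1}n_{m+1}) = S(m_1,…,m_{m+1})·S(n_1,…,n_{m+1})`
whenever `gcd(m_1⋯m_{m+1}, n_1⋯n_{m+1}) = 1`. -/
theorem stmt_5 (γs : List ℕ) (fs : List (ℕ → ℂ))
    (hm : 1 ≤ γs.length) (hf : fs.length = γs.length + 1)
    (hγpos : ∀ γ ∈ γs, 0 < γ)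
    (hmult : ∀ f ∈ fs, ∀ a b : ℕ, 0 < a → 0 < b → Nat.Coprime a b →
      f (a * b) = f a * f b)
    (ms ns : List ℕ)
    (hms : ms.length = γs.length + 1) (hns : ns.length = γs.length + 1)
    (hmpos : ∀ x ∈ ms, 0 < x) (hnpos : ∀ x ∈ ns, 0 < x)
    (hcop : Nat.Coprime ms.prod ns.prod) :
    mRam γs fs (List.zipWith (· * ·) ms ns) = mRam γs fs ms * mRam γs fs ns := by
  exact mRam_mul γs fs hf hmult ms ns hms hns hmpos hnpos hcop
end

section
/- Let n ∈ ℕ and let e, d be positive divisors of n. Then Σ_{δ : e|δ and δ|n} c(n/δ, n/d) equals n/e if d | e, and equals 0 otherwise. -/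
/-!
The substitution `k = n / δ` identifies the multiples `δ` of `e` dividing `n` with the divisors `k`
of `n / e`, so the sum equals `∑_{k ∣ N} c(k, m)` with `N = n / e` and `m = n / d`. By definition
`c(·, m)` is the Dirichlet convolution of `μ` with `N ↦ N · [N ∣ m]`, so Möbius inversion
(`sum_divisors_ramC`) evaluates this to `N` if `N ∣ m` and `0` otherwise; and `n / e ∣ n / d`
holds exactly when `d ∣ e`.
-/

open scoped BigOperators

/-- The Ramanujan sum `c(k,n) = ∑_{d ∣ gcd(k,n)} μ(k/d) d`. -/
noncomputable def ramC (k n : ℕ) : ℤ :=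
  ∑ d ∈ (Nat.gcd k n).divisors, ArithmeticFunction.moebius (k / d) * d

theorem sum_divisors_ramC (m : ℕ) : ∀ N > 0,
    ∑ k ∈ N.divisors, ramC k m = if N ∣ m then (N : ℤ) else 0 := by
  rw [ArithmeticFunction.sum_eq_iff_sum_mul_moebius_eq]
  intro k hk
  simp only [Int.cast_id]
  rw [Nat.sum_divisorsAntidiagonal' (fun a b : ℕ =>
    ArithmeticFunction.moebius a * (if b ∣ m then (b : ℤ) else 0))]
  have hdiv : (Nat.gcd k m).divisors = k.divisors.filter (fun i => i ∣ m) := by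
    ext i
    have hg : Nat.gcd k m ≠ 0 := (Nat.gcd_pos_of_pos_left m hk).ne'
    simp only [Nat.mem_divisors, Finset.mem_filter, Nat.dvd_gcd_iff]
    have hk0 : k ≠ 0 := hk.ne'
    tauto
  simp only [ramC, hdiv, Finset.sum_filter, mul_ite, mul_zero]

/-- Formula (4.9): for `e ∣ n` and `d ∣ n`,
`∑_{δ : e ∣ δ ∣ n} c(n/δ, n/d) = n/e` if `d ∣ e`, and `0` otherwise. -/
theorem stmt_6 (n e d : ℕ) (hn : 0 < n) (he : e ∣ n) (hd : d ∣ n) :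
    ∑ δ ∈ n.divisors.filter (fun δ => e ∣ δ), ramC (n / δ) (n / d)
      = if d ∣ e then ((n / e : ℕ) : ℤ) else 0 := by
  have hN : 0 < n / e := Nat.div_pos_iff.2 ⟨Nat.pos_of_dvd_of_pos he hn, Nat.le_of_dvd hn he⟩
  have hiff : n / e ∣ n / d ↔ d ∣ e := by
    obtain ⟨a, rfl⟩ := he
    obtain ⟨b, hb⟩ := hd
    have he0 : 0 < e := Nat.pos_of_mul_pos_right hn
    have ha0 : 0 < a := Nat.pos_of_mul_pos_left hn
    have hd0 : 0 < d := Nat.pos_of_ne_zero (by rintro rfl; simp at hb; omega)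
    rw [Nat.mul_div_cancel_left _ he0, hb, Nat.mul_div_cancel_left _ hd0]
    constructor
    · rintro ⟨c, rfl⟩
      exact ⟨c, Nat.eq_of_mul_eq_mul_right ha0 (by rw [hb]; ring)⟩
    · rintro ⟨c, rfl⟩
      exact ⟨c, Nat.eq_of_mul_eq_mul_left hd0 (by rw [← hb]; ring)⟩
  have key := sum_divisors_ramC (n / d) (n / e) hN
  simp only [hiff] at key
  rw [← key]
  refine Finset.sum_bij' (fun δ _ => n / δ) (fun k _ => n / k) ?_ ?_ ?_ ?_ ?_
  · intro δ hδ
    simp only [Finset.mem_filter, Nat.mem_divisors] at hδ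
    exact Nat.mem_divisors.2 ⟨Nat.div_dvd_div_left hδ.1.1 hδ.2, hN.ne'⟩
  · intro k hk
    have hk' := Nat.dvd_of_mem_divisors hk
    have hkn : k ∣ n := hk'.trans (Nat.div_dvd_of_dvd he)
    refine Finset.mem_filter.2 ⟨Nat.mem_divisors.2 ⟨Nat.div_dvd_of_dvd hkn, hn.ne'⟩, ?_⟩
    have h := Nat.div_dvd_div_left (Nat.div_dvd_of_dvd he) hk'
    rwa [Nat.div_div_self he hn.ne'] at h
  · intro δ hδ
    simp only [Finset.mem_filter, Nat.mem_divisors] at hδ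
    exact Nat.div_div_self hδ.1.1 hn.ne'
  · intro k hk
    exact Nat.div_div_self ((Nat.dvd_of_mem_divisors hk).trans (Nat.div_dvd_of_dvd he)) hn.ne'
  · intro δ _
    rfl
end

section
/- Let m ≥ 1, γ = (γ_1,…,γ_m) ∈ ℕ^m, f = (f_1,…,f_{m+1}) arithmetic functions, ξ an m-variable arithmetic function, and n_1 ∈ ℕ. The function (n_2,…,n_{m+1}) ↦ S^{γ,ξ}_f(n_1,n_2,…,n_{m+1}) is even mod n_1, and its finite Fourier coefficients are given by: a^{γ,ξ}_{f,n_1}(l_2,…,l_{m+1}) = n_1^{-m} · S^{ᵗξ^γ_{n_1}}_{ᵗf̃}(n_1, l_{m+1},…,l_2) (coefficients in the exponential expansion S^{γ,ξ}_f(n_1,…,n_{m+1}) = Σ_{l_2,…,l_{m+1}=1}^{n_1} a^{γ,ξ}_{f,n_1}(l_2,…,l_{m+1}) e(n_1,n_2l_2)⋯e(n_1,n_{m+1}l_{m+1})), and α^{γ,ξ}_{f,n_1}(d_2,…,d_{m+1}) = n_1^{-m} · S^{ᵗξ^γ_{n_1}}_{ᵗf̃}(n_1, n_1/d_{m+1},…,n_1/d_2)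 (coefficients in the even expansion S^{γ,ξ}_f(n_1,…,n_{m+1}) = Σ_{d_2,…,d_{m+1} | n_1} α^{γ,ξ}_{f,n_1}(d_2,…,d_{m+1}) c(d_2,n_2)⋯c(d_{m+1},n_{m+1})). -/
/-!
The recursion defining `S^{γ,ξ}_f(n₁,…,n_{m+1})` unfolds into one sum over tuples
`D = (D₁,…,D_m)` of divisors of `n₁`, with summand
`ξ(D) ∏ a_{γ_i}(D_i) ∏ [D_i ∣ n_{i+1}] · f₁(n₁/D₁) f₂(D₁/D₂) ⋯ f_{m+1}(D_m)` (`mRamW_eq_sum`).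
The variables `n₂,…,n_{m+1}` enter only through the indicators `[D_i ∣ n_{i+1}]`, and evenness
mod `n₁` is immediate because `D_i ∣ n₁`.

For the coefficients, the transposed sum is unfolded in the same way and its chain `E` is replaced
by the chain `D` with `E_j = n₁ / D_{m+1-j}`. This reverses the chain of quotients, and the extra
powers `δ^j` telescope to `n₁^m / (D₁ ⋯ D_m)`. Hence the proposed coefficient at `l` is the same
sum over `D` with `[D_i ∣ n_{i+1}]` replaced by `D_i⁻¹ [n₁/D_i ∣ l_i]` (`coeff_eq_sum`).

Both expansions then factor over the coordinates (`expansion`) and reduce to the one-variable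
identities, for `D ∣ n`,
`∑_{l=1}^{n} [n/D ∣ l] e(n, x l) = D [D ∣ x]` (`exp_kernel`) and
`∑_{d ∣ n} [n/D ∣ n/d] c(d, x) = ∑_{d ∣ D} c(d, x) = D [D ∣ x]` (`ram_kernel`).
-/

open scoped BigOperators

/-- The weighted multiple Ramanujan sum `S^{γ,ξ}_{f}(n_1,…,n_{m+1})`, where the
weight `ξ` receives the list `[d_1^{γ_1},…,d_m^{γ_m}]`.  By the convention
`f(x) = 0` for non-integral `x`, the defining sum collapses to this recursion. -/
noncomputable def mRamW : List ℕ → List (ℕ → ℂ) → (List ℕ → ℂ) → List ℕ → ℂ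
  | [], f :: _, ξ, n :: _ => ξ [] * f n
  | γ :: γs, f :: fs, ξ, n₁ :: n₂ :: ns =>
      ∑ d ∈ (Nat.gcd n₁ n₂).divisors.filter (fun d => d ^ γ ∣ Nat.gcd n₁ n₂),
        f (n₁ / d ^ γ) * mRamW γs fs (fun l => ξ (d ^ γ :: l)) (d ^ γ :: ns)
  | _, _, _, _ => 0

/-- The Ramanujan sum `c(k,n) = ∑_{d ∣ gcd(k,n)} μ(k/d) d`, as a complex number. -/
noncomputable def ramCC (k n : ℕ) : ℂ :=
  ∑ d ∈ (Nat.gcd k n).divisors, ((ArithmeticFunction.moebius (k / d) : ℤ) : ℂ) * d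

/-! ### The multiple Ramanujan sum as a sum over divisor chains -/

/-- The value `f (a / b)`, read as `0` when `a / b` is not an integer. -/
noncomputable def quotVal (f : ℕ → ℂ) (a b : ℕ) : ℂ := if b ∣ a then f (a / b) else 0

/-- The indicator of the divisibility `b ∣ a`. -/
noncomputable def dvdInd (b a : ℕ) : ℂ := if b ∣ a then 1 else 0

/-- The product `f₁(n/D₁) f₂(D₁/D₂) ⋯ f_{m+1}(D_m)`: the numerators are listed by
`Fin.cons n D`, the denominators by `Fin.snoc D 1`. -/
noncomputable def chainProd {m : ℕ} (f : Fin (m + 1) → ℕ → ℂ) (n : ℕ) (D : Fin m → ℕ) : ℂ :=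
  ∏ i : Fin (m + 1),
    quotVal (f i) ((Fin.cons n D : Fin (m + 1) → ℕ) i) ((Fin.snoc D 1 : Fin (m + 1) → ℕ) i)

/-- The sum over bases `d` with `d ^ γ ∣ gcd n k` as a sum over the powers `D = d ^ γ` themselves,
extended by `0` to all divisors of a multiple `N` of `n`. -/
lemma sum_powers_eq (γ n k N : ℕ) (hγ : 0 < γ) (hn : 0 < n) (hN : 0 < N) (hnN : n ∣ N)
    (g : ℕ → ℂ) :
    ∑ d ∈ (Nat.gcd n k).divisors.filter (fun d => d ^ γ ∣ Nat.gcd n k), g (d ^ γ)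
      = ∑ D ∈ N.divisors, aPow γ D * dvdInd D k * dvdInd D n * g D := by
  classical
  have hrhs : ∑ D ∈ N.divisors, aPow γ D * dvdInd D k * dvdInd D n * g D
      = ∑ D ∈ N.divisors.filter (fun D => (∃ d : ℕ, 0 < d ∧ D = d ^ γ) ∧ D ∣ k ∧ D ∣ n),
          g D := by
    rw [Finset.sum_filter]
    refine Finset.sum_congr rfl fun D _ => ?_
    unfold aPow dvdInd
    by_cases h1 : ∃ d : ℕ, 0 < d ∧ D = d ^ γ <;> by_cases h2 : D ∣ k <;> by_cases h3 : D ∣ n <;>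
      simp [h1, h2, h3]
  have himg : N.divisors.filter (fun D => (∃ d : ℕ, 0 < d ∧ D = d ^ γ) ∧ D ∣ k ∧ D ∣ n)
      = ((Nat.gcd n k).divisors.filter (fun d => d ^ γ ∣ Nat.gcd n k)).image (fun d => d ^ γ) := by
    have hg : Nat.gcd n k ≠ 0 := (Nat.gcd_pos_of_pos_left k hn).ne'
    ext D
    simp only [Finset.mem_filter, Finset.mem_image, Nat.mem_divisors]
    constructor
    · rintro ⟨-, ⟨d, -, rfl⟩, h2, h3⟩
      have h := Nat.dvd_gcd h3 h2
      exact ⟨d, ⟨⟨(dvd_pow_self d hγ.ne').trans h, hg⟩, h⟩, rfl⟩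
    · rintro ⟨d, ⟨⟨h1, -⟩, h2⟩, rfl⟩
      have h3 := h2.trans (Nat.gcd_dvd_left n k)
      exact ⟨⟨h3.trans hnN, hN.ne'⟩, ⟨d, Nat.pos_of_dvd_of_pos h1 (Nat.pos_of_ne_zero hg), rfl⟩,
        h2.trans (Nat.gcd_dvd_right n k), h3⟩
  rw [hrhs, himg, Finset.sum_image]
  intro a _ b _ hab
  exact Nat.pow_left_injective hγ.ne' hab

lemma sum_piFinset_succ {m : ℕ} (s : Finset ℕ) (F : (Fin (m + 1) → ℕ) → ℂ) :
    ∑ D ∈ Fintype.piFinset (fun _ : Fin (m + 1) => s), F D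
      = ∑ d ∈ s, ∑ D ∈ Fintype.piFinset (fun _ : Fin m => s), F (Fin.cons d D) := by
  rw [← Finset.sum_product']
  refine (Finset.sum_bij' (fun p _ => Fin.cons p.1 p.2) (fun D _ => (D 0, Fin.tail D))
    ?_ ?_ ?_ ?_ ?_).symm
  · intro p hp
    simp only [Finset.mem_product, Fintype.mem_piFinset] at hp ⊢
    intro i
    refine Fin.cases ?_ (fun j => ?_) i
    · simpa using hp.1
    · simpa using hp.2 j
  · intro D hD
    simp only [Finset.mem_product, Fintype.mem_piFinset] at hD ⊢
    exact ⟨hD 0, fun i => hD i.succ⟩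
  · intro p _
    simp
  · intro D _
    simp
  · intro p _
    rfl

lemma chainProd_cons {m : ℕ} (f : Fin (m + 2) → ℕ → ℂ) (n d : ℕ) (D : Fin m → ℕ) :
    chainProd f n (Fin.cons d D : Fin (m + 1) → ℕ)
      = quotVal (f 0) n d * chainProd (fun i => f i.succ) d D := by
  unfold chainProd
  rw [Fin.prod_univ_succ]
  refine congrArg₂ (· * ·) rfl (Finset.prod_congr rfl fun i _ => ?_)
  rw [← Fin.cons_snoc_eq_snoc_cons, Fin.cons_succ, Fin.cons_succ]

/-- The recursive definition of the multiple Ramanujan sum, unfolded into one sum over all tuples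
of divisors of a fixed multiple `N` of `n`, with the summation conditions turned into indicators. -/
lemma mRamW_eq_sum (N : ℕ) (hN : 0 < N) :
    ∀ (m : ℕ) (γ : Fin m → ℕ) (_ : ∀ j, 0 < γ j) (f : Fin (m + 1) → ℕ → ℂ) (ξ : List ℕ → ℂ)
      (n : ℕ) (_ : n ∣ N) (ns : Fin m → ℕ),
      mRamW (List.ofFn γ) (List.ofFn f) ξ (n :: List.ofFn ns)
        = ∑ D ∈ Fintype.piFinset (fun _ : Fin m => N.divisors),
            ξ (List.ofFn D) * (∏ i, aPow (γ i) (D i)) * (∏ i, dvdInd (D i) (ns i))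
              * chainProd f n D := by
  intro m
  induction m with
  | zero =>
    intro γ hγ f ξ n hn ns
    simp [mRamW, chainProd, quotVal, Fin.snoc]
  | succ m ih =>
    intro γ hγ f ξ n hn ns
    have hn0 : 0 < n := Nat.pos_of_dvd_of_pos hn hN
    rw [List.ofFn_succ (f := γ), List.ofFn_succ (f := f), List.ofFn_succ (f := ns), mRamW,
      sum_powers_eq (γ 0) n (ns 0) N (hγ 0) hn0 hN hn
        (fun D => f 0 (n / D) * mRamW (List.ofFn fun i => γ i.succ) (List.ofFn fun i => f i.succ)
          (fun l => ξ (D :: l)) (D :: List.ofFn fun i => ns i.succ)),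
      sum_piFinset_succ]
    refine Finset.sum_congr rfl fun d hd => ?_
    rw [ih _ (fun j => hγ j.succ) _ _ d (Nat.dvd_of_mem_divisors hd), Finset.mul_sum,
      Finset.mul_sum]
    refine Finset.sum_congr rfl fun D _ => ?_
    rw [chainProd_cons, Fin.prod_univ_succ, Fin.prod_univ_succ, List.ofFn_cons]
    simp only [Fin.cons_zero, Fin.cons_succ]
    have hq : quotVal (f 0) n d = dvdInd d n * f 0 (n / d) := by
      simp [quotVal, dvdInd]
    rw [hq]
    ring

/-! ### Reversing the chain -/

lemma quotVal_pow (f : ℕ → ℂ) (k a b : ℕ) (hb : b ≠ 0) :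
    quotVal (fun x => (x : ℂ) ^ k * f x) a b = ((a : ℂ) / b) ^ k * quotVal f a b := by
  unfold quotVal
  split_ifs with h
  · have hb' : (b : ℂ) ≠ 0 := by exact_mod_cast hb
    simp only [Nat.cast_div h hb']
  · simp

/-- The powers in `ᵗf̃` telescope: `(n/D₁)^m (D₁/D₂)^(m-1) ⋯ (D_m/1)^0 = n^m / (D₁ ⋯ D_m)`. -/
lemma prod_telescope {m : ℕ} (n : ℕ) (D : Fin m → ℕ) (hD : ∀ i, D i ≠ 0) :
    ∏ i : Fin (m + 1), (((Fin.cons n D : Fin (m + 1) → ℕ) i : ℂ)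
        / ((Fin.snoc D 1 : Fin (m + 1) → ℕ) i : ℂ)) ^ (Fin.rev i : ℕ)
      = (n : ℂ) ^ m * ∏ i, ((D i : ℂ))⁻¹ := by
  simp only [div_pow, Finset.prod_div_distrib]
  rw [Fin.prod_univ_succ, Fin.prod_univ_castSucc (n := m)]
  simp only [Fin.cons_zero, Fin.cons_succ, Fin.snoc_castSucc, Fin.snoc_last, Fin.val_rev,
    Fin.val_zero, Fin.val_succ, Fin.val_castSucc, Fin.val_last, Nat.cast_one, one_pow, mul_one]
  rw [mul_div_assoc, ← Finset.prod_div_distrib]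
  congr 1
  refine Finset.prod_congr rfl fun i _ => ?_
  have h : (D i : ℂ) ≠ 0 := by exact_mod_cast hD i
  have e : m + 1 - (i + 1) = (m + 1 - (i + 1 + 1)) + 1 := by omega
  rw [e, pow_succ]
  field_simp

lemma div_div_div_eq_of_dvd {n a b : ℕ} (hn : 0 < n) (ha : a ∣ n) (hb : b ∣ n) :
    (n / a ∣ n / b ↔ b ∣ a) ∧ (b ∣ a → (n / b) / (n / a) = a / b) := by
  obtain ⟨c, rfl⟩ := ha
  obtain ⟨d, hd⟩ := hb
  have ha0 : 0 < a := Nat.pos_of_mul_pos_right hn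
  have hc0 : 0 < c := Nat.pos_of_mul_pos_left hn
  have hb0 : 0 < b := Nat.pos_of_mul_pos_right (hd ▸ hn)
  have e1 : a * c / a = c := Nat.mul_div_cancel_left c ha0
  have e2 : a * c / b = d := by rw [hd, Nat.mul_div_cancel_left d hb0]
  rw [e1, e2]
  have key : ∀ k, d = c * k ↔ a = b * k := by
    intro k
    constructor
    · rintro rfl
      apply Nat.eq_of_mul_eq_mul_right hc0
      rw [hd]; ring
    · rintro rfl
      apply Nat.eq_of_mul_eq_mul_left hb0
      rw [← hd]; ring
  refine ⟨exists_congr key, ?_⟩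
  rintro ⟨k, hk⟩
  rw [(key k).2 hk, hk, Nat.mul_div_cancel_left k hc0, Nat.mul_div_cancel_left k hb0]

/-- Passing to complementary divisors in reverse order reverses the chain. -/
lemma chainProd_reverse {m : ℕ} (f : Fin (m + 1) → ℕ → ℂ) (n : ℕ) (hn : 0 < n) (D : Fin m → ℕ)
    (hD : ∀ i, D i ∣ n) :
    chainProd f n (fun j => n / D (Fin.rev j))
      = chainProd (fun i => f (Fin.rev i)) n D := by
  unfold chainProd
  rw [← Equiv.prod_comp Fin.revPerm]
  refine Finset.prod_congr rfl fun i _ => ?_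
  have h1 : (Fin.cons n (fun j => n / D (Fin.rev j)) : Fin (m + 1) → ℕ) (Fin.rev i)
      = n / (Fin.snoc D 1 : Fin (m + 1) → ℕ) i := by
    refine Fin.lastCases ?_ (fun j => ?_) i
    · simp
    · simp [Fin.rev_castSucc]
  have h2 : (Fin.snoc (fun j => n / D (Fin.rev j)) 1 : Fin (m + 1) → ℕ) (Fin.rev i)
      = n / (Fin.cons n D : Fin (m + 1) → ℕ) i := by
    refine Fin.cases ?_ (fun j => ?_) i
    · simp [Nat.div_self hn]
    · simp [Fin.rev_succ]
  have h3 : (Fin.snoc D 1 : Fin (m + 1) → ℕ) i ∣ n := by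
    refine Fin.lastCases ?_ (fun j => ?_) i
    · simp
    · simpa using hD j
  have h4 : (Fin.cons n D : Fin (m + 1) → ℕ) i ∣ n := by
    refine Fin.cases ?_ (fun j => ?_) i
    · simp
    · simpa using hD j
  obtain ⟨h5, h6⟩ := div_div_div_eq_of_dvd hn h4 h3
  simp only [Fin.revPerm_apply]
  rw [h1, h2]
  unfold quotVal
  by_cases h : (Fin.snoc D 1 : Fin (m + 1) → ℕ) i ∣ (Fin.cons n D : Fin (m + 1) → ℕ) i
  · rw [if_pos h, if_pos (h5.2 h), h6 h]
  · rw [if_neg h, if_neg (fun h' => h (h5.1 h'))]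

lemma reverse_ofFn' {α : Type*} {m : ℕ} (l : Fin m → α) :
    (List.ofFn l).reverse = List.ofFn (fun i => l (Fin.rev i)) := by
  apply List.ext_getElem
  · simp
  · intro i h1 h2
    simp only [List.getElem_reverse, List.getElem_ofFn]
    congr 1
    ext
    simp [Fin.val_rev]
    omega

lemma zipWith_ofFn' {α β δ : Type*} {m : ℕ} (g : α → β → δ) (a : Fin m → α) (b : Fin m → β) :
    List.zipWith g (List.ofFn a) (List.ofFn b) = List.ofFn (fun i => g (a i) (b i)) := by
  apply List.ext_getElem
  · simp
  · intro i h1 h2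
    simp

lemma aPow_one {n : ℕ} (hn : 0 < n) : aPow 1 n = 1 := by
  unfold aPow
  rw [if_pos ⟨n, hn, by simp⟩]

/-- The normalised transposed Ramanujan sum as a sum over the original chains `D`. -/
lemma coeff_eq_sum {m : ℕ} (γ : Fin m → ℕ) (f : Fin (m + 1) → ℕ → ℂ) (ξ : List ℕ → ℂ)
    (n : ℕ) (hn : 0 < n) (l : Fin m → ℕ) :
    ((n : ℂ) ^ m)⁻¹ *
      mRamW (List.replicate m 1)
        (List.ofFn fun j : Fin (m + 1) => fun x : ℕ => (x : ℂ) ^ (j : ℕ) * f (Fin.rev j) x)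
        (fun ds =>
          (List.zipWith (fun g e => aPow g (n / e)) (List.ofFn γ) ds.reverse).prod
            * ξ (ds.reverse.map (fun e => n / e)))
        (n :: (List.ofFn l).reverse)
      = ∑ D ∈ Fintype.piFinset (fun _ : Fin m => n.divisors),
          ξ (List.ofFn D) * (∏ i, aPow (γ i) (D i)) * chainProd f n D
            * ∏ i, ((D i : ℂ)⁻¹ * dvdInd (n / D i) (l i)) := by
  rw [← List.ofFn_const, reverse_ofFn', mRamW_eq_sum n hn m _ (fun _ => one_pos) _ _ n dvd_rfl,
    Finset.mul_sum]
  have hmem : ∀ E ∈ Fintype.piFinset (fun _ : Fin m => n.divisors),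
      (fun j => n / E (Fin.rev j)) ∈ Fintype.piFinset (fun _ : Fin m => n.divisors) := by
    intro E hE
    simp only [Fintype.mem_piFinset, Nat.mem_divisors] at hE ⊢
    exact fun i => ⟨Nat.div_dvd_of_dvd (hE _).1, hn.ne'⟩
  have hinv : ∀ E ∈ Fintype.piFinset (fun _ : Fin m => n.divisors),
      (fun j => n / (fun k => n / E (Fin.rev k)) (Fin.rev j)) = E := by
    intro E hE
    simp only [Fintype.mem_piFinset, Nat.mem_divisors] at hE
    funext j
    simp only [Fin.rev_rev]
    exact Nat.div_div_self (hE j).1 hn.ne'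
  symm
  refine Finset.sum_bij' (fun D _ => fun j => n / D (Fin.rev j))
    (fun E _ => fun j => n / E (Fin.rev j)) hmem hmem hinv hinv ?_
  intro D hD
  have hDn : ∀ i, D i ∣ n := fun i => Nat.dvd_of_mem_divisors (Fintype.mem_piFinset.1 hD i)
  have hD0 : ∀ i, D i ≠ 0 := fun i => (Nat.pos_of_dvd_of_pos (hDn i) hn).ne'
  have hone : ∀ i : Fin m, aPow 1 (n / D (Fin.rev i)) = 1 := fun i =>
    aPow_one (Nat.div_pos (Nat.le_of_dvd hn (hDn _)) (Nat.pos_of_ne_zero (hD0 _)))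
  have hdd : ∀ i, n / (n / D i) = D i := fun i => Nat.div_div_self (hDn i) hn.ne'
  have hind : ∏ i : Fin m, dvdInd (n / D (Fin.rev i)) (l (Fin.rev i))
      = ∏ i : Fin m, dvdInd (n / D i) (l i) :=
    Equiv.prod_comp Fin.revPerm (fun i => dvdInd (n / D i) (l i))
  have hchain : chainProd (fun j : Fin (m + 1) => fun x : ℕ => (x : ℂ) ^ (j : ℕ) * f (Fin.rev j) x)
      n (fun j => n / D (Fin.rev j))
      = (n : ℂ) ^ m * (∏ i, ((D i : ℂ))⁻¹) * chainProd f n D := by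
    rw [chainProd_reverse _ n hn D hDn, ← prod_telescope n D hD0]
    unfold chainProd
    rw [← Finset.prod_mul_distrib]
    refine Finset.prod_congr rfl fun i _ => ?_
    rw [quotVal_pow, Fin.rev_rev]
    refine Fin.lastCases ?_ (fun j => ?_) i
    · simp
    · simpa using hD0 j
  have hnm : (n : ℂ) ^ m ≠ 0 := pow_ne_zero _ (by exact_mod_cast hn.ne')
  simp only [hchain, reverse_ofFn', zipWith_ofFn', List.map_ofFn, List.prod_ofFn, Fin.rev_rev,
    hdd, hone, hind, Finset.prod_mul_distrib, Function.comp_def, Finset.prod_const_one]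
  field_simp

/-! ### Expansions from one-variable kernels -/

/-- A kernel `K` that expands each indicator `D ∣ x` with `D ∣ n` in terms of the conditions
`n / D ∣ φ l` expands the whole multiple Ramanujan sum, with the transposed sum as coefficient. -/
lemma expansion {m : ℕ} (γ : Fin m → ℕ) (hγ : ∀ j, 0 < γ j) (f : Fin (m + 1) → ℕ → ℂ)
    (ξ : List ℕ → ℂ) (n : ℕ) (hn : 0 < n) (s : Finset ℕ) (φ : ℕ → ℕ) (K : ℕ → ℕ → ℂ)
    (hK : ∀ D x, D ∣ n → ∑ l ∈ s, dvdInd (n / D) (φ l) * K l x = D * dvdInd D x)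
    (ns : Fin m → ℕ) :
    mRamW (List.ofFn γ) (List.ofFn f) ξ (n :: List.ofFn ns)
      = ∑ l ∈ Fintype.piFinset (fun _ : Fin m => s),
          (((n : ℂ) ^ m)⁻¹ *
            mRamW (List.replicate m 1)
              (List.ofFn fun j : Fin (m + 1) => fun x : ℕ => (x : ℂ) ^ (j : ℕ) * f (Fin.rev j) x)
              (fun ds =>
                (List.zipWith (fun g e => aPow g (n / e)) (List.ofFn γ) ds.reverse).prod
                  * ξ (ds.reverse.map (fun e => n / e)))
              (n :: (List.ofFn (fun i => φ (l i))).reverse))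
            * ∏ i : Fin m, K (l i) (ns i) := by
  simp only [coeff_eq_sum γ f ξ n hn, Finset.sum_mul]
  rw [Finset.sum_comm, mRamW_eq_sum n hn m γ hγ f ξ n dvd_rfl ns]
  refine Finset.sum_congr rfl fun D hD => ?_
  have hDn : ∀ i, D i ∣ n := fun i => Nat.dvd_of_mem_divisors (Fintype.mem_piFinset.1 hD i)
  have hprod : ∏ i, dvdInd (D i) (ns i)
      = ∑ l ∈ Fintype.piFinset (fun _ : Fin m => s),
          ∏ i, ((D i : ℂ)⁻¹ * dvdInd (n / D i) (φ (l i)) * K (l i) (ns i)) := by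
    rw [← Finset.prod_univ_sum (fun _ : Fin m => s)
      (fun i l => (D i : ℂ)⁻¹ * dvdInd (n / D i) (φ l) * K l (ns i))]
    refine Finset.prod_congr rfl fun i _ => ?_
    have h0 : (D i : ℂ) ≠ 0 := by exact_mod_cast (Nat.pos_of_dvd_of_pos (hDn i) hn).ne'
    simp only [mul_assoc]
    rw [← Finset.mul_sum, hK _ _ (hDn i), inv_mul_cancel_left₀ h0]
  rw [hprod, Finset.mul_sum, Finset.sum_mul]
  refine Finset.sum_congr rfl fun l _ => ?_
  simp only [Finset.prod_mul_distrib]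
  ring

lemma sum_root_of_unity (D x : ℕ) (hD : 0 < D) :
    ∑ k ∈ Finset.Icc 1 D, Complex.exp (2 * (Real.pi : ℂ) * Complex.I * ((x * k : ℕ) : ℂ) / (D : ℂ))
      = D * dvdInd D x := by
  set ζ : ℂ := Complex.exp (2 * Real.pi * Complex.I / D) with hζ
  have hprim : IsPrimitiveRoot ζ D := Complex.isPrimitiveRoot_exp D hD.ne'
  have hterm : ∀ k : ℕ, Complex.exp (2 * (Real.pi : ℂ) * Complex.I * ((x * k : ℕ) : ℂ) / (D : ℂ))
      = (ζ ^ x) ^ k := by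
    intro k
    rw [← pow_mul, hζ, ← Complex.exp_nat_mul]
    congr 1
    ring
  simp only [hterm]
  unfold dvdInd
  split_ifs with h
  · rw [(hprim.pow_eq_one_iff_dvd x).2 h]
    simp
  · have h1 : ζ ^ x ≠ 1 := fun h' => h ((hprim.pow_eq_one_iff_dvd x).1 h')
    have h2 : (ζ ^ x) ^ D = 1 := by rw [← pow_mul, mul_comm, pow_mul, hprim.pow_eq_one, one_pow]
    rw [← Finset.Ico_add_one_right_eq_Icc, geom_sum_Ico h1 (by omega), pow_succ, h2]
    simp

/-- The exponentials expand `D ∣ x`: the `l ≤ n` divisible by `n / D` are the `(n / D) k` with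
`k ≤ D`, which leaves a complete sum of `D`-th roots of unity. -/
lemma exp_kernel (n : ℕ) (hn : 0 < n) (D x : ℕ) (hD : D ∣ n) :
    ∑ l ∈ Finset.Icc 1 n, dvdInd (n / D) l
        * Complex.exp (2 * (Real.pi : ℂ) * Complex.I * ((x * l : ℕ) : ℂ) / (n : ℂ))
      = D * dvdInd D x := by
  obtain ⟨E, rfl⟩ := hD
  have hD0 : 0 < D := Nat.pos_of_mul_pos_right hn
  have hE0 : 0 < E := Nat.pos_of_mul_pos_left hn
  rw [Nat.mul_div_cancel_left E hD0, ← sum_root_of_unity D x hD0]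
  simp only [dvdInd, ite_mul, one_mul, zero_mul]
  rw [← Finset.sum_filter]
  symm
  refine Finset.sum_bij (fun k _ => E * k) ?_ ?_ ?_ ?_
  · intro k hk
    simp only [Finset.mem_Icc, Finset.mem_filter] at hk ⊢
    exact ⟨⟨Nat.mul_pos hE0 hk.1, by rw [mul_comm D]; exact Nat.mul_le_mul_left _ hk.2⟩,
      dvd_mul_right _ _⟩
  · intro a _ b _ h
    exact Nat.eq_of_mul_eq_mul_left hE0 h
  · intro b hb
    simp only [Finset.mem_Icc, Finset.mem_filter] at hb
    obtain ⟨⟨h1, h2⟩, k, rfl⟩ := hb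
    refine ⟨k, ?_, rfl⟩
    rw [mul_comm D] at h2
    exact Finset.mem_Icc.2 ⟨Nat.pos_of_mul_pos_left h1, Nat.le_of_mul_le_mul_left h2 hE0⟩
  · intro k _
    have h1 : (D : ℂ) ≠ 0 := by exact_mod_cast hD0.ne'
    have h2 : (E : ℂ) ≠ 0 := by exact_mod_cast hE0.ne'
    congr 1
    push_cast
    field_simp

/-- Möbius inversion of the definition of `c(k, x)`. -/
lemma sum_ramCC (x D : ℕ) (hD : 0 < D) :
    ∑ d ∈ D.divisors, ramCC d x = D * dvdInd D x := by
  refine (ArithmeticFunction.sum_eq_iff_sum_mul_moebius_eq (f := fun d => ramCC d x)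
    (g := fun D : ℕ => (D : ℂ) * dvdInd D x)).2 ?_ D hD
  intro k hk
  rw [Nat.sum_divisorsAntidiagonal' (f := fun a b =>
    ((ArithmeticFunction.moebius a : ℤ) : ℂ) * ((b : ℂ) * dvdInd b x))]
  have hset : (Nat.gcd k x).divisors = k.divisors.filter (fun d => d ∣ x) := by
    ext d
    simp only [Nat.mem_divisors, Finset.mem_filter, Nat.dvd_gcd_iff]
    have := (Nat.gcd_pos_of_pos_left x hk).ne'
    have := hk.ne'
    tauto
  unfold ramCC
  rw [hset, Finset.sum_filter]
  refine Finset.sum_congr rfl fun d _ => ?_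
  by_cases h : d ∣ x <;> simp [dvdInd, h]

/-- Ramanujan sums expand `D ∣ x`: for `d ∣ n` the condition `n / D ∣ n / d` means `d ∣ D`. -/
lemma ram_kernel (n : ℕ) (hn : 0 < n) (D x : ℕ) (hD : D ∣ n) :
    ∑ d ∈ n.divisors, dvdInd (n / D) (n / d) * ramCC d x = D * dvdInd D x := by
  rw [← sum_ramCC x D (Nat.pos_of_dvd_of_pos hD hn)]
  have hset : D.divisors = n.divisors.filter (fun d => n / D ∣ n / d) := by
    ext d
    simp only [Nat.mem_divisors, Finset.mem_filter]
    constructor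
    · rintro ⟨h, -⟩
      exact ⟨⟨h.trans hD, hn.ne'⟩, (div_div_div_eq_of_dvd hn hD (h.trans hD)).1.2 h⟩
    · rintro ⟨⟨h, -⟩, h'⟩
      exact ⟨(div_div_div_eq_of_dvd hn hD h).1.1 h', (Nat.pos_of_dvd_of_pos hD hn).ne'⟩
  rw [hset, Finset.sum_filter]
  refine Finset.sum_congr rfl fun d _ => ?_
  simp [dvdInd]

/-- Theorem 2.4: as a function of `(n_2,…,n_{m+1})`, the weighted multiple Ramanujan
sum `S^{γ,ξ}_f(n_1,n_2,…,n_{m+1})` is even mod `n_1`, its finite Fourier coefficients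
in the exponential expansion are `a(l_2,…,l_{m+1}) = n_1^{-m}·S^{ᵗξ^γ_{n_1}}_{ᵗf̃}(n_1,l_{m+1},…,l_2)`
and those in the even expansion are
`α(d_2,…,d_{m+1}) = n_1^{-m}·S^{ᵗξ^γ_{n_1}}_{ᵗf̃}(n_1,n_1/d_{m+1},…,n_1/d_2)`, where
`ᵗf̃ = (δ^0 f_{m+1}, δ^1 f_m, …, δ^m f_1)` and
`ᵗξ^γ_n(d_1,…,d_m) = (∏_j a_{γ_j}(n/d_{m+1-j}))·ξ(n/d_m,…,n/d_1)`. -/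
theorem stmt_7 (m : ℕ) (hm : 1 ≤ m) (γ : Fin m → ℕ) (hγ : ∀ j, 0 < γ j)
    (f : Fin (m + 1) → ℕ → ℂ) (ξ : List ℕ → ℂ) (n₁ : ℕ) (hn₁ : 0 < n₁) :
    -- `S^{γ,ξ}_f(n₁; ·)` is even mod `n₁`
    (∀ ns : Fin m → ℕ, (∀ i, 0 < ns i) →
      mRamW (List.ofFn γ) (List.ofFn f) ξ
          (n₁ :: List.ofFn (fun i => Nat.gcd (ns i) n₁))
        = mRamW (List.ofFn γ) (List.ofFn f) ξ (n₁ :: List.ofFn ns))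
    ∧
    -- the exponential finite Fourier expansion, formula (2.10)
    (∀ ns : Fin m → ℕ, (∀ i, 0 < ns i) →
      mRamW (List.ofFn γ) (List.ofFn f) ξ (n₁ :: List.ofFn ns)
        = ∑ l ∈ Fintype.piFinset (fun _ : Fin m => Finset.Icc 1 n₁),
            (((n₁ : ℂ) ^ m)⁻¹ *
              mRamW (List.replicate m 1)
                (List.ofFn fun j : Fin (m + 1) => fun x : ℕ =>
                  (x : ℂ) ^ (j : ℕ) * f (Fin.rev j) x)
                (fun ds =>
                  (List.zipWith (fun g e => aPow g (n₁ / e)) (List.ofFn γ) ds.reverse).prod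
                    * ξ (ds.reverse.map (fun e => n₁ / e)))
                (n₁ :: (List.ofFn l).reverse))
              * ∏ i : Fin m,
                  Complex.exp (2 * (Real.pi : ℂ) * Complex.I * ((ns i * l i : ℕ) : ℂ) / (n₁ : ℂ)))
    ∧
    -- the even finite Fourier expansion, formula (2.11)
    (∀ ns : Fin m → ℕ, (∀ i, 0 < ns i) →
      mRamW (List.ofFn γ) (List.ofFn f) ξ (n₁ :: List.ofFn ns)
        = ∑ dd ∈ Fintype.piFinset (fun _ : Fin m => n₁.divisors),
            (((n₁ : ℂ) ^ m)⁻¹ *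
              mRamW (List.replicate m 1)
                (List.ofFn fun j : Fin (m + 1) => fun x : ℕ =>
                  (x : ℂ) ^ (j : ℕ) * f (Fin.rev j) x)
                (fun ds =>
                  (List.zipWith (fun g e => aPow g (n₁ / e)) (List.ofFn γ) ds.reverse).prod
                    * ξ (ds.reverse.map (fun e => n₁ / e)))
                (n₁ :: (List.ofFn (fun i => n₁ / dd i)).reverse))
              * ∏ i : Fin m, ramCC (dd i) (ns i)) := by
  refine ⟨fun ns _ => ?_, fun ns _ => ?_, fun ns _ => ?_⟩
  · rw [mRamW_eq_sum n₁ hn₁ m γ hγ f ξ n₁ dvd_rfl, mRamW_eq_sum n₁ hn₁ m γ hγ f ξ n₁ dvd_rfl]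
    refine Finset.sum_congr rfl fun D hD => ?_
    have hDn : ∀ i, D i ∣ n₁ := fun i => Nat.dvd_of_mem_divisors (Fintype.mem_piFinset.1 hD i)
    have h : ∀ i, dvdInd (D i) (Nat.gcd (ns i) n₁) = dvdInd (D i) (ns i) := fun i => by
      simp [dvdInd, Nat.dvd_gcd_iff, hDn i]
    simp only [h]
  · exact expansion γ hγ f ξ n₁ hn₁ (Finset.Icc 1 n₁) (fun l => l)
      (fun l x => Complex.exp (2 * (Real.pi : ℂ) * Complex.I * ((x * l : ℕ) : ℂ) / (n₁ : ℂ)))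
      (fun D x hD => exp_kernel n₁ hn₁ D x hD) ns
  · exact expansion γ hγ f ξ n₁ hn₁ n₁.divisors (fun d => n₁ / d) ramCC
      (fun D x hD => ram_kernel n₁ hn₁ D x hD) ns
end

section
/- Let m ≥ 1, γ = (γ_1,…,γ_m) ∈ ℕ^m, f_1,…,f_{m+1} arithmetic functions, and n_2,…,n_{m+1} ∈ ℕ. For Re(s) > σ(f_1), the Dirichlet series over the first variable satisfies Σ_{n_1=1}^∞ S^{(γ_1,…,γ_m)}_{f_1,…,f_{m+1}}(n_1,…,n_{m+1}) n_1^{-s} = L(s;f_1) · Σ_{d : d^{γ_1} | n_2} d^{-γ_1 s} S^{(γ_2,…,γ_m)}_{f_2,…,f_{m+1}}(d^{γ_1}, n_3,…,n_{m+1}). -/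
/-!
On positive `n₁`, the sum over `d` with `d ^ γ₁ ∣ gcd n₁ n₂` is the sum over the finite set of `d`
with `d ^ γ₁ ∣ n₂`, restricted to those `d` for which `d ^ γ₁ ∣ n₁`. Hence the Dirichlet series is a
finite linear combination of the Dirichlet series of `n ↦ f₁ (n / k)` (zero unless `k ∣ n`) with
`k = d ^ γ₁`. Substituting `n = k * m` shows that each of these converges with sum
`k ^ (-s) * L(s; f₁)` (`hasSum_term_dilate`).
-/

open scoped BigOperators

/-- The Dirichlet series of `n ↦ f (n / k)`, extended by zero off the multiples of `k`, sums to
`k ^ (-s) * L(s; f)`. -/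
lemma hasSum_term_dilate (f : ℕ → ℂ) (s : ℂ) (h : LSeriesSummable f s) (k : ℕ) (hk : 0 < k) :
    HasSum (LSeries.term (fun n => if k ∣ n then f (n / k) else 0) s)
      ((k : ℂ) ^ (-s) * LSeries f s) := by
  have hinj : Function.Injective (fun m : ℕ => k * m) :=
    fun a b hab => Nat.eq_of_mul_eq_mul_left hk hab
  rw [← hinj.hasSum_iff]
  · have h1 : HasSum (LSeries.term f s) (LSeries f s) := h.LSeriesHasSum
    suffices hcomp : LSeries.term (fun n => if k ∣ n then f (n / k) else 0) s ∘ (fun m => k * m) =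
        fun m => (k : ℂ) ^ (-s) * LSeries.term f s m by
      rw [hcomp]
      exact h1.mul_left _
    funext m
    rcases Nat.eq_zero_or_pos m with rfl | hm
    · simp
    · have hkm : k * m ≠ 0 := (Nat.mul_pos hk hm).ne'
      simp only [Function.comp_apply]
      rw [LSeries.term_of_ne_zero hkm, LSeries.term_of_ne_zero hm.ne', if_pos (dvd_mul_right k m),
        Nat.mul_div_cancel_left _ hk, Nat.cast_mul, Complex.natCast_mul_natCast_cpow,
        Complex.cpow_neg, div_eq_mul_inv, div_eq_mul_inv, mul_inv]
      ring
  · intro n hn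
    have hkn : ¬ k ∣ n := fun ⟨m, hm⟩ => hn ⟨m, hm.symm⟩
    rcases Nat.eq_zero_or_pos n with rfl | hn0
    · simp
    · rw [LSeries.term_of_ne_zero hn0.ne', if_neg hkn, zero_div]

/-- Proposition 3.1 (i): for `Re(s) > σ(f_1)`,
`∑_{n_1 ≥ 1} S^{(γ_1,…,γ_m)}_{f_1,…,f_{m+1}}(n_1,…,n_{m+1}) n_1^{-s}
  = L(s;f_1) · ∑_{d^{γ_1} ∣ n_2} d^{-γ_1 s} S^{(γ_2,…,γ_m)}_{f_2,…,f_{m+1}}(d^{γ_1},n_3,…,n_{m+1})`.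
Here `γtail = [γ_2,…,γ_m]`, `ftail = [f_2,…,f_{m+1}]`, `ntail = [n_3,…,n_{m+1}]`. -/
theorem stmt_8 (γ₁ : ℕ) (γtail : List ℕ) (f₁ : ℕ → ℂ) (ftail : List (ℕ → ℂ))
    (n₂ : ℕ) (ntail : List ℕ)
    (hγ₁ : 0 < γ₁) (hγpos : ∀ γ ∈ γtail, 0 < γ)
    (hf : ftail.length = γtail.length + 1) (hn : ntail.length = γtail.length)
    (hn₂ : 0 < n₂) (hnpos : ∀ x ∈ ntail, 0 < x)
    (s : ℂ) (hs : LSeries.abscissaOfAbsConv f₁ < (s.re : EReal)) :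
    LSeries (fun n₁ => mRam (γ₁ :: γtail) (f₁ :: ftail) (n₁ :: n₂ :: ntail)) s
      = LSeries f₁ s *
        ∑ d ∈ n₂.divisors.filter (fun d => d ^ γ₁ ∣ n₂),
          (d : ℂ) ^ (-((γ₁ : ℂ) * s)) * mRam γtail ftail (d ^ γ₁ :: ntail) := by
  have hsum := LSeriesSummable_of_abscissaOfAbsConv_lt_re hs
  set D := n₂.divisors.filter (fun d => d ^ γ₁ ∣ n₂) with hD
  have hDpos : ∀ d ∈ D, 0 < d ^ γ₁ := fun d hd =>
    pow_pos (Nat.pos_of_mem_divisors (Finset.mem_filter.mp hd).1) _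
  have key : HasSum (fun n => ∑ d ∈ D, mRam γtail ftail (d ^ γ₁ :: ntail) *
        LSeries.term (fun n => if d ^ γ₁ ∣ n then f₁ (n / d ^ γ₁) else 0) s n)
      (∑ d ∈ D, mRam γtail ftail (d ^ γ₁ :: ntail) *
        (((d ^ γ₁ : ℕ) : ℂ) ^ (-s) * LSeries f₁ s)) :=
    hasSum_sum fun d hd => (hasSum_term_dilate f₁ s hsum _ (hDpos d hd)).mul_left _
  have hterm : LSeries.term
      (fun n₁ => mRam (γ₁ :: γtail) (f₁ :: ftail) (n₁ :: n₂ :: ntail)) s =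
      fun n => ∑ d ∈ D, mRam γtail ftail (d ^ γ₁ :: ntail) *
        LSeries.term (fun n => if d ^ γ₁ ∣ n then f₁ (n / d ^ γ₁) else 0) s n := by
    funext n
    rcases Nat.eq_zero_or_pos n with rfl | hn0
    · simp
    have hset : (Nat.gcd n n₂).divisors.filter (fun d => d ^ γ₁ ∣ Nat.gcd n n₂) =
        D.filter (fun d => d ^ γ₁ ∣ n) := by
      ext d
      have hg : Nat.gcd n n₂ ≠ 0 := (Nat.gcd_pos_of_pos_left _ hn0).ne'
      simp only [hD, Finset.mem_filter, Nat.mem_divisors, Nat.dvd_gcd_iff]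
      -- As `γ₁ > 0`, `d ∣ d ^ γ₁`, so membership in the divisor sets is automatic.
      have hd : d ∣ d ^ γ₁ := dvd_pow_self d hγ₁.ne'
      constructor
      · rintro ⟨⟨⟨_, h2⟩, _⟩, h3, h4⟩
        exact ⟨⟨⟨h2, hn₂.ne'⟩, h4⟩, h3⟩
      · rintro ⟨⟨⟨h2, _⟩, h4⟩, h3⟩
        exact ⟨⟨⟨hd.trans h3, h2⟩, hg⟩, h3, h4⟩
    rw [LSeries.term_of_ne_zero hn0.ne']
    simp only [LSeries.term_of_ne_zero hn0.ne']
    rw [mRam, hset, Finset.sum_filter, Finset.sum_div]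
    refine Finset.sum_congr rfl fun d _ => ?_
    split_ifs
    · ring
    · simp
  rw [LSeries, hterm, key.tsum_eq, Finset.mul_sum]
  refine Finset.sum_congr rfl fun d _ => ?_
  have hpow : ((d ^ γ₁ : ℕ) : ℂ) ^ (-s) = (d : ℂ) ^ (-((γ₁ : ℂ) * s)) := by
    rw [← mul_neg, Complex.natCast_cpow_natCast_mul, Nat.cast_pow]
  rw [hpow]
  ring
end

section
/- Let m ≥ 1, γ = (γ_1,…,γ_m) ∈ ℕ^m, f_1,…,f_{m+1} arithmetic functions, 2 ≤ j ≤ m+1, and fix n_1,…,n_{j-1},n_{j+1},…,n_{m+1} ∈ ℕ. For Re(s) > 1, Σ_{n_j=1}^∞ S^{(γ_1,…,γ_m)}_{f_1,…,f_{m+1}}(n_1,…,n_{m+1}) n_j^{-s} = ζ(s) · S^{(γ_1,…,γ_{j-2})}_{f_1,…,f_{j-2},F_j}(n_1,…,n_{j-1}), where F_j is the one-variable arithmetic function F_j(n) := Σ_{d : d^{γ_{j-1}} | n} f_{j-1}(n/d^{γ_{j-1}}) d^{-γ_{j-1} s} S^{(γ_j,…,γ_m)}_{f_j,…,f_{m+1}}(d^{γ_{j-1}},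 n_{j+1},…,n_{m+1}). -/
/-!
Only the factor attached to `d = d_{j-1}` sees the variable `n_j`, and it does so only through the
condition `d ^ γ_{j-1} ∣ n_j`.  The Dirichlet series of the indicator of the multiples of `e ≥ 1` is
`ζ(s) e^{-s}` (`hasSum_multiples`), and every divisor sum is finite, so for `j = 2` the identity
follows by exchanging the finite sum over `d` with the series.  The sums over `d_1, …, d_{j-2}` do
not involve `n_j`, so the general case follows by induction on `j` from linearity
(`hasSum_mRam`).  Convergence is carried along by working with `LSeriesHasSum`.
-/

open scoped BigOperators

/-- The Dirichlet series of the indicator function of the multiples of `e` is `ζ(s) e^{-s}`. -/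
lemma hasSum_multiples (e : ℕ) (he : 0 < e) (s : ℂ) (hs : 1 < s.re) :
    LSeriesHasSum (fun n => if e ∣ n then 1 else 0) s (riemannZeta s * (e : ℂ) ^ (-s)) := by
  have hinj : Function.Injective (fun k : ℕ => e * k) := fun a b h =>
    Nat.eq_of_mul_eq_mul_left he h
  unfold LSeriesHasSum
  rw [← hinj.hasSum_iff]
  · have h1 := (LSeriesHasSum_one hs).mul_right ((e : ℂ) ^ (-s))
    refine h1.congr_fun ?_
    intro k
    rcases Nat.eq_zero_or_pos k with rfl | hk
    · simp
    · have hek : e * k ≠ 0 := by positivity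
      simp only [Function.comp, LSeries.term_of_ne_zero hek, LSeries.term_of_ne_zero hk.ne',
        dvd_mul_right, if_true, Pi.one_apply]
      rw [Nat.cast_mul, Complex.natCast_mul_natCast_cpow, Complex.cpow_neg, one_div, one_div,
        mul_inv, mul_comm]
  · intro n hn
    have : ¬ e ∣ n := fun ⟨k, hk⟩ => hn ⟨k, hk.symm⟩
    simp [LSeries.term_def, this]

/-- Dirichlet series commute with finite linear combinations. -/
lemma hasSum_finset_sum {ι : Type*} (t : Finset ι) (c : ι → ℂ) (g : ι → ℕ → ℂ) (a : ι → ℂ) (s : ℂ)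
    (h : ∀ i ∈ t, LSeriesHasSum (g i) s (a i)) :
    LSeriesHasSum (fun n => ∑ i ∈ t, c i * g i n) s (∑ i ∈ t, c i * a i) := by
  have h1 := hasSum_sum (fun i hi => (h i hi).mul_left (c i))
  refine h1.congr_fun ?_
  intro n
  simp only [LSeries.term_def]
  split_ifs with hn
  · simp
  · simp [Finset.sum_div, mul_div_assoc]

/-- The identity together with convergence of the Dirichlet series, in the form of an induction on
the parameters preceding index `j`. -/
lemma hasSum_mRam (γsuf : List ℕ) (γj1 : ℕ) (fsuf : List (ℕ → ℂ)) (fj1 : ℕ → ℂ) (nsuf : List ℕ)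
    (hγj1 : 0 < γj1) (s : ℂ) (hs : 1 < s.re) :
    ∀ (γpre : List ℕ) (fpre : List (ℕ → ℂ)) (npre : List ℕ),
      fpre.length = γpre.length → npre.length = γpre.length + 1 → (∀ x ∈ npre, 0 < x) →
      LSeriesHasSum (fun nj =>
          mRam (γpre ++ γj1 :: γsuf) (fpre ++ fj1 :: fsuf) (npre ++ nj :: nsuf)) s
        (riemannZeta s *
          mRam γpre
            (fpre ++ [fun n : ℕ =>
              ∑ d ∈ n.divisors.filter (fun d => d ^ γj1 ∣ n),
                fj1 (n / d ^ γj1) * (d : ℂ) ^ (-((γj1 : ℂ) * s)) *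
                  mRam γsuf fsuf (d ^ γj1 :: nsuf)])
            npre) := by
  intro γpre
  induction γpre with
  | nil =>
    intro fpre npre hf hn hpos
    obtain rfl := List.length_eq_zero_iff.mp hf
    obtain ⟨n, rfl⟩ := List.length_eq_one_iff.mp hn
    have hn0 : 0 < n := hpos n (by simp)
    have key := hasSum_finset_sum (n.divisors.filter (fun d => d ^ γj1 ∣ n))
      (fun d => fj1 (n / d ^ γj1) * mRam γsuf fsuf (d ^ γj1 :: nsuf))
      (fun d k => if d ^ γj1 ∣ k then 1 else 0)
      (fun d => riemannZeta s * ((d ^ γj1 : ℕ) : ℂ) ^ (-s)) s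
      (fun d hd => hasSum_multiples _ (Nat.pow_pos
        (Nat.pos_of_mem_divisors (Finset.mem_filter.mp hd).1)) s hs)
    convert (LSeriesHasSum_congr s _ ?_).mp key using 1
    · simp only [List.nil_append, mRam, Finset.mul_sum]
      refine Finset.sum_congr rfl fun d _ => ?_
      rw [Nat.cast_pow, ← mul_neg, Complex.natCast_cpow_natCast_mul]
      ring
    · intro k hk
      simp only [List.nil_append, List.cons_append, mRam, mul_ite, mul_one, mul_zero]
      rw [← Finset.sum_filter]
      refine Finset.sum_congr ?_ fun _ _ => rfl
      ext d
      -- As `γj1 > 0`, the bound `d ∣ k` on the range of summation follows from `d ^ γj1 ∣ k`.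
      have hd : d ^ γj1 ∣ k → d ∣ k := fun h => (dvd_pow_self d hγj1.ne').trans h
      simp only [Finset.mem_filter, Nat.mem_divisors, Nat.dvd_gcd_iff, ne_eq, Nat.gcd_eq_zero_iff]
      have := hn0.ne'
      tauto
  | cons γ γs ih =>
    intro fpre npre hf hn hpos
    obtain ⟨f, fs, rfl⟩ := List.exists_cons_of_length_eq_add_one hf
    obtain ⟨n₁, l, rfl⟩ := List.exists_cons_of_length_eq_add_one hn
    simp only [List.length_cons, Nat.add_right_cancel_iff] at hf hn
    obtain ⟨n₂, ns, rfl⟩ := List.exists_cons_of_length_eq_add_one hn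
    simp only [List.length_cons, Nat.add_right_cancel_iff] at hn
    simp only [List.cons_append, mRam]
    have key := hasSum_finset_sum _ (fun d => f (n₁ / d ^ γ)) _ _ s
      (fun d (hd : d ∈ (Nat.gcd n₁ n₂).divisors.filter (fun d => d ^ γ ∣ Nat.gcd n₁ n₂)) =>
        ih fs (d ^ γ :: ns) hf (by simpa using hn) (by
          intro x hx
          rcases List.mem_cons.mp hx with rfl | hx
          · exact Nat.pow_pos (Nat.pos_of_mem_divisors (Finset.mem_filter.mp hd).1)
          · exact hpos x (by simp [hx])))
    convert key using 1
    · rfl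
    · rw [Finset.mul_sum]
      exact Finset.sum_congr rfl fun d _ => by ring

/-- Proposition 3.1 (ii): for `2 ≤ j ≤ m+1` and `Re(s) > 1`,
`∑_{n_j ≥ 1} S^{(γ_1,…,γ_m)}_{f_1,…,f_{m+1}}(n_1,…,n_{m+1}) n_j^{-s}
  = ζ(s) · S^{(γ_1,…,γ_{j-2})}_{f_1,…,f_{j-2},F_j}(n_1,…,n_{j-1})`, where
`F_j(n) = ∑_{d^{γ_{j-1}} ∣ n} f_{j-1}(n/d^{γ_{j-1}}) d^{-γ_{j-1}s}
  S^{(γ_j,…,γ_m)}_{f_j,…,f_{m+1}}(d^{γ_{j-1}},n_{j+1},…,n_{m+1})`.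
Here `γpre = [γ_1,…,γ_{j-2}]`, `γj1 = γ_{j-1}`, `γsuf = [γ_j,…,γ_m]`,
`fpre = [f_1,…,f_{j-2}]`, `fj1 = f_{j-1}`, `fsuf = [f_j,…,f_{m+1}]`,
`npre = [n_1,…,n_{j-1}]`, `nsuf = [n_{j+1},…,n_{m+1}]`. -/
theorem stmt_9 (γpre γsuf : List ℕ) (γj1 : ℕ) (fpre fsuf : List (ℕ → ℂ))
    (fj1 : ℕ → ℂ) (npre nsuf : List ℕ)
    (hγj1 : 0 < γj1) (hγpos : ∀ γ ∈ γpre ++ γsuf, 0 < γ)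
    (hf1 : fpre.length = γpre.length) (hf2 : fsuf.length = γsuf.length + 1)
    (hn1 : npre.length = γpre.length + 1) (hn2 : nsuf.length = γsuf.length)
    (hnpos : ∀ x ∈ npre ++ nsuf, 0 < x)
    (s : ℂ) (hs : 1 < s.re) :
    LSeries (fun nj =>
        mRam (γpre ++ γj1 :: γsuf) (fpre ++ fj1 :: fsuf) (npre ++ nj :: nsuf)) s
      = riemannZeta s *
        mRam γpre
          (fpre ++ [fun n : ℕ =>
            ∑ d ∈ n.divisors.filter (fun d => d ^ γj1 ∣ n),
              fj1 (n / d ^ γj1) * (d : ℂ) ^ (-((γj1 : ℂ) * s)) *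
                mRam γsuf fsuf (d ^ γj1 :: nsuf)])
          npre := by
  have h := hasSum_mRam γsuf γj1 fsuf fj1 nsuf hγj1 s hs γpre fpre npre hf1 hn1
    (fun x hx => hnpos x (List.mem_append_left _ hx))
  exact h.LSeries_eq
end

section
/- Let γ ∈ ℕ and let f_1, f_2, g_1, g_2 be completely multiplicative arithmetic functions. Then Σ_{n_1,n_2=1}^∞ S^{(γ)}_{f_1,f_2}(n_1,n_2) S^{(γ)}_{g_1,g_2}(n_1,n_2) n_1^{-s_1} n_2^{-s_2} = ζ(s_2) L(s_1; f_1g_1) L(s_1+s_2; (f_2g_1)^{[γ]}) L(s_1+s_2; (f_1g_2)^{[γ]}) L(s_1+s_2; (f_2g_2)^{[γ]}) / L(2(s_1+s_2); (f_1f_2g_1g_2)^{[γ]}), valid for (s_1,s_2) ∈ ℂ² with Re(s_2) > 1, Re(s_1) > σ(f_1g_1), and Re(s_1+s_2) > max{σ(f_2g_1), σ(f_1g_2), σ(f_2g_2), σ(f_1f_2g_1g_2)/2}. -/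
/-!
Write two divisors `d`, `e` as `d = k a`, `e = k b` with `a`, `b` coprime. Expanding the product of
the two Ramanujan sums gives a sum over `(n₁, n₂, d, e)` with `d ^ γ` and `e ^ γ` dividing `n₁` and
`n₂`, that is `n₁ = l m₁`, `n₂ = l m₂` with `l = lcm (d ^ γ) (e ^ γ) = (k a b) ^ γ`. By complete
multiplicativity the general term factors as

`(f₁ g₁)(m₁) m₁^{-s₁} · m₂^{-s₂} · C k · A a · B b`,

where `A`, `B`, `C` are the terms `F (k ^ γ) (k ^ γ)^{-(s₁ + s₂)}` for `F = f₂ g₁, f₁ g₂, f₂ g₂`. The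
sums over `m₁`, `m₂`, `k` give `L(s₁; f₁ g₁)`, `ζ(s₂)` and `∑ C`, and there remains the sum `K` of
`A a * B b` over coprime pairs. Extracting the gcd from the unrestricted double sum in the same way
(`hasSum_gcd_split` does both) gives `(∑ A) (∑ B) = (∑ A B) K`. The denominator `∑ A B` is nonzero by
the Euler product (`sum_ne_zero_of_mul`) unless `A B` vanishes at `1`, in which case `K = 0` as well
and the convention `x / 0 = 0` makes the formula hold.

All series are indexed by `ℕ+` and converge absolutely, so the rearrangements are legitimate.
-/

open scoped BigOperators

/-- The generalized Ramanujan sum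
`S^{(γ)}_{f_1,f_2}(n_1,n_2) = ∑_{d^γ ∣ gcd(n_1,n_2)} f_1(n_1/d^γ) f_2(d^γ)`. -/
noncomputable def gRam (γ : ℕ) (f₁ f₂ : ℕ → ℂ) (n₁ n₂ : ℕ) : ℂ :=
  ∑ d ∈ (Nat.gcd n₁ n₂).divisors.filter (fun d => d ^ γ ∣ Nat.gcd n₁ n₂),
    f₁ (n₁ / d ^ γ) * f₂ (d ^ γ)

/-- The terms of the Dirichlet series of `F` at `s` along the `γ`-th powers. -/
noncomputable def powTerm (γ : ℕ) (F : ℕ → ℂ) (s : ℂ) (k : ℕ+) : ℂ :=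
  F ((k : ℕ) ^ γ) * (((k : ℕ) ^ γ : ℕ) : ℂ) ^ (-s)

lemma powTerm_mul (γ : ℕ) (F : ℕ → ℂ) (hF : ∀ a b : ℕ, 0 < a → 0 < b → F (a * b) = F a * F b)
    (s : ℂ) (a b : ℕ+) : powTerm γ F s (a * b) = powTerm γ F s a * powTerm γ F s b := by
  simp only [powTerm, PNat.mul_coe, mul_pow]
  rw [hF _ _ (pow_pos a.pos _) (pow_pos b.pos _), Nat.cast_mul, Complex.natCast_mul_natCast_cpow]
  ring

lemma hasSum_powTerm (γ : ℕ) (hγ : 0 < γ) (F : ℕ → ℂ) (s : ℂ)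
    (h : LSeries.abscissaOfAbsConv F < (s.re : EReal)) :
    HasSum (powTerm γ F s) (LSeries (fun n => aPow γ n * F n) s) := by
  have hinj : Function.Injective (fun k : ℕ+ => (k : ℕ) ^ γ) := fun a b hab =>
    PNat.coe_injective (Nat.pow_left_injective hγ.ne' hab)
  have hs : Summable (LSeries.term F s) := LSeriesSummable_of_abscissaOfAbsConv_lt_re h
  have hpow : ∀ k : ℕ+, aPow γ ((k : ℕ) ^ γ) = 1 := fun k => if_pos ⟨k, k.pos, rfl⟩
  have hterm : ∀ k : ℕ+, LSeries.term F s ((k : ℕ) ^ γ) = powTerm γ F s k := fun k => by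
    rw [LSeries.term_of_ne_zero (pow_pos k.pos γ).ne', powTerm, Complex.cpow_neg, div_eq_mul_inv]
  have hcomp : (LSeries.term (fun n => aPow γ n * F n) s) ∘ (fun k : ℕ+ => (k : ℕ) ^ γ)
      = powTerm γ F s := by
    funext k
    rw [← hterm k]
    simp only [Function.comp_apply, LSeries.term_def, hpow, one_mul]
  have hsum : Summable (powTerm γ F s) := by
    have hF : LSeries.term F s ∘ (fun k : ℕ+ => (k : ℕ) ^ γ) = powTerm γ F s := funext hterm
    exact hF ▸ hs.comp_injective hinj
  have hoff : ∀ n ∉ Set.range (fun k : ℕ+ => (k : ℕ) ^ γ),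
      LSeries.term (fun n => aPow γ n * F n) s n = 0 := by
    intro n hn
    have : aPow γ n = 0 := if_neg (by
      rintro ⟨d, hd, rfl⟩
      exact hn ⟨⟨d, hd⟩, rfl⟩)
    simp [LSeries.term_def, this]
  have key := hsum.hasSum
  rw [← hcomp, hinj.hasSum_iff hoff] at key
  rw [LSeries, key.tsum_eq, ← hcomp]
  rw [← hinj.hasSum_iff hoff] at key
  exact key

lemma aPow_one_mul (F : ℕ → ℂ) (s : ℂ) :
    LSeries (fun n => aPow 1 n * F n) s = LSeries F s := by
  refine LSeries_congr (fun {n} hn => ?_) s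
  have : aPow 1 n = 1 := if_pos ⟨n, Nat.pos_of_ne_zero hn, (pow_one n).symm⟩
  rw [this, one_mul]

/-- Every pair of positive integers is uniquely a multiple of a coprime pair. -/
noncomputable def gcdSplit : ℕ+ × {q : ℕ+ × ℕ+ // Nat.Coprime q.1 q.2} ≃ ℕ+ × ℕ+ :=
  Equiv.ofBijective (fun t => (t.1 * t.2.1.1, t.1 * t.2.1.2)) <| by
    constructor
    · rintro ⟨k, ⟨⟨a, b⟩, hab⟩⟩ ⟨k', ⟨⟨a', b'⟩, hab'⟩⟩ h
      simp only [Prod.mk.injEq] at h hab hab'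
      obtain ⟨h₁, h₂⟩ := h
      have h₁' : (k : ℕ) * a = k' * a' := by exact_mod_cast congrArg PNat.val h₁
      have h₂' : (k : ℕ) * b = k' * b' := by exact_mod_cast congrArg PNat.val h₂
      have hk : k = k' := by
        apply PNat.coe_injective
        have e₁ : Nat.gcd ((k : ℕ) * a) (k * b) = k := by
          rw [Nat.gcd_mul_left, hab.gcd_eq_one, mul_one]
        have e₂ : Nat.gcd ((k' : ℕ) * a') (k' * b') = k' := by
          rw [Nat.gcd_mul_left, hab'.gcd_eq_one, mul_one]
        rw [h₁', h₂', e₂] at e₁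
        exact e₁.symm
      subst hk
      simp only [mul_right_inj] at h₁ h₂
      subst h₁ h₂
      rfl
    · rintro ⟨d, e⟩
      obtain ⟨a, b, hab, hd, he⟩ := Nat.exists_coprime (d : ℕ) e
      have hg : 0 < Nat.gcd d e := Nat.gcd_pos_of_pos_left _ d.pos
      have ha : 0 < a := Nat.pos_of_ne_zero (by rintro rfl; simp at hd)
      have hb : 0 < b := Nat.pos_of_ne_zero (by rintro rfl; simp at he)
      refine ⟨(⟨_, hg⟩, ⟨(⟨a, ha⟩, ⟨b, hb⟩), hab⟩), ?_⟩
      refine Prod.ext (PNat.coe_injective ?_) (PNat.coe_injective ?_)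
      · exact (mul_comm _ _).trans hd.symm
      · exact (mul_comm _ _).trans he.symm

lemma HasSum.mul_complex {ι κ : Type*} {u : ι → ℂ} {v : κ → ℂ} {a b : ℂ}
    (hu : HasSum u a) (hv : HasSum v b) :
    HasSum (fun x : ι × κ => u x.1 * v x.2) (a * b) :=
  hu.mul hv (summable_mul_of_summable_norm hu.summable.norm hv.summable.norm)

/-- If `G (k a, k b) = C k * A a * B b` for coprime `a`, `b`, then the double sum of `G` is the sum
of `C` times the sum of `A a * B b` over coprime pairs. -/
lemma hasSum_gcd_split {A B C : ℕ+ → ℂ} {K c : ℂ} {G : ℕ+ × ℕ+ → ℂ}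
    (hK : HasSum (fun q : {q : ℕ+ × ℕ+ // Nat.Coprime q.1 q.2} => A q.1.1 * B q.1.2) K)
    (hC : HasSum C c)
    (hG : ∀ k a b : ℕ+, Nat.Coprime a b → G (k * a, k * b) = C k * (A a * B b)) :
    HasSum G (c * K) := by
  rw [← gcdSplit.hasSum_iff]
  convert hC.mul_complex hK using 1
  funext t
  exact hG t.1 t.2.1.1 t.2.1.2 t.2.2

/-- The sum of an absolutely summable completely multiplicative function which is nonzero at `1`
does not vanish, by its Euler product. -/
lemma sum_ne_zero_of_mul {D : ℕ+ → ℂ} {S : ℂ} (hD : HasSum D S)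
    (hmul : ∀ a b, D (a * b) = D a * D b) (h1 : D 1 ≠ 0) : S ≠ 0 := by
  let φ : ℕ →*₀ ℂ :=
    { toFun := fun n => if h : 0 < n then D ⟨n, h⟩ else 0
      map_zero' := by simp
      map_one' := by
        have := hmul 1 1
        rw [mul_one] at this
        have h2 : D 1 = 1 := by
          have := mul_left_cancel₀ h1 (this.symm.trans (mul_one _).symm)
          exact this
        simpa using h2
      map_mul' := by
        intro a b
        rcases Nat.eq_zero_or_pos a with rfl | ha
        · simp
        rcases Nat.eq_zero_or_pos b with rfl | hb
        · simp
        have hab : 0 < a * b := Nat.mul_pos ha hb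
        rw [dif_pos ha, dif_pos hb, dif_pos hab]
        exact hmul ⟨a, ha⟩ ⟨b, hb⟩ }
  have hφ : HasSum (fun n => φ n) S := by
    rw [← PNat.coe_injective.hasSum_iff]
    · convert hD using 1
      funext k
      exact dif_pos k.pos
    · intro n hn
      refine dif_neg (fun h => hn ⟨⟨n, h⟩, rfl⟩)
  rw [← hφ.tsum_eq, ← EulerProduct.exp_tsum_primes_log_eq_tsum hφ.summable.norm]
  exact Complex.exp_ne_zero _

/-- The summand of the generalized Ramanujan sum, extended by zero to all positive `d`. -/
noncomputable def ramTerm (γ : ℕ) (f₁ f₂ : ℕ → ℂ) (n₁ n₂ : ℕ+) (d : ℕ+) : ℂ :=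
  if (d : ℕ) ^ γ ∣ Nat.gcd n₁ n₂ then f₁ ((n₁ : ℕ) / (d : ℕ) ^ γ) * f₂ ((d : ℕ) ^ γ) else 0

lemma hasSum_ramTerm (γ : ℕ) (hγ : 0 < γ) (f₁ f₂ : ℕ → ℂ) (n₁ n₂ : ℕ+) :
    HasSum (ramTerm γ f₁ f₂ n₁ n₂) (gRam γ f₁ f₂ n₁ n₂) := by
  have hg : Nat.gcd n₁ n₂ ≠ 0 := (Nat.gcd_pos_of_pos_left _ n₁.pos).ne'
  let w : ℕ → ℂ := fun d =>
    if d ^ γ ∣ Nat.gcd n₁ n₂ then f₁ ((n₁ : ℕ) / d ^ γ) * f₂ (d ^ γ) else 0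
  have hw : HasSum w (gRam γ f₁ f₂ n₁ n₂) := by
    have : gRam γ f₁ f₂ n₁ n₂ = ∑ d ∈ (Nat.gcd n₁ n₂).divisors, w d := Finset.sum_filter _ _
    rw [this]
    refine hasSum_sum_of_ne_finset_zero (fun d hd => if_neg (fun h => hd ?_))
    exact Nat.mem_divisors.2 ⟨(dvd_pow_self d hγ.ne').trans h, hg⟩
  rw [← PNat.coe_injective.hasSum_iff] at hw
  · exact hw
  · intro d hd
    refine if_neg (fun h => ?_)
    rcases Nat.eq_zero_or_pos d with rfl | hpos
    · rw [zero_pow hγ.ne', zero_dvd_iff] at h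
      exact hg h
    · exact hd ⟨⟨d, hpos⟩, rfl⟩

/-- `lcm (d ^ γ) (e ^ γ)` as a positive integer, for `q = (d, e)`. -/
def lcmPow (γ : ℕ) (q : ℕ+ × ℕ+) : ℕ+ :=
  ⟨Nat.lcm ((q.1 : ℕ) ^ γ) ((q.2 : ℕ) ^ γ),
    Nat.lcm_pos (pow_pos q.1.pos γ) (pow_pos q.2.pos γ)⟩

lemma lcmPow_gcd_split (γ : ℕ) (k a b : ℕ+) (hab : Nat.Coprime a b) :
    (lcmPow γ (k * a, k * b) : ℕ) = (k : ℕ) ^ γ * ((a : ℕ) ^ γ * (b : ℕ) ^ γ) := by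
  simp only [lcmPow, PNat.mul_coe, PNat.mk_coe, mul_pow]
  rw [Nat.lcm_mul_left, (hab.pow γ γ).lcm_eq_mul]

/-- Theorem 3.8: for completely multiplicative `f_1,f_2,g_1,g_2`,
`L((s_1,s_2); S^{(γ)}_{f_1,f_2} S^{(γ)}_{g_1,g_2})
 = ζ(s_2) L(s_1;f_1g_1) L(s_1+s_2;(f_2g_1)^{[γ]}) L(s_1+s_2;(f_1g_2)^{[γ]})
     L(s_1+s_2;(f_2g_2)^{[γ]}) / L(2(s_1+s_2);(f_1f_2g_1g_2)^{[γ]})`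
in the indicated region. -/
theorem stmt_11 (γ : ℕ) (hγ : 0 < γ) (f₁ f₂ g₁ g₂ : ℕ → ℂ)
    (hcm : ∀ h ∈ [f₁, f₂, g₁, g₂], ∀ a b : ℕ, 0 < a → 0 < b →
      h (a * b) = h a * h b)
    (s₁ s₂ : ℂ) (hs₂ : 1 < s₂.re)
    (h1 : LSeries.abscissaOfAbsConv (fun n => f₁ n * g₁ n) < (s₁.re : EReal))
    (h2 : LSeries.abscissaOfAbsConv (fun n => f₂ n * g₁ n) < ((s₁ + s₂).re : EReal))
    (h3 : LSeries.abscissaOfAbsConv (fun n => f₁ n * g₂ n) < ((s₁ + s₂).re : EReal))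
    (h4 : LSeries.abscissaOfAbsConv (fun n => f₂ n * g₂ n) < ((s₁ + s₂).re : EReal))
    (h5 : LSeries.abscissaOfAbsConv (fun n => f₁ n * f₂ n * g₁ n * g₂ n)
      < ((2 * (s₁ + s₂).re : ℝ) : EReal)) :
    ∑' p : ℕ+ × ℕ+,
        gRam γ f₁ f₂ p.1 p.2 * gRam γ g₁ g₂ p.1 p.2 *
          ((p.1 : ℕ) : ℂ) ^ (-s₁) * ((p.2 : ℕ) : ℂ) ^ (-s₂)
      = riemannZeta s₂ * LSeries (fun n => f₁ n * g₁ n) s₁ *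
          LSeries (fun n => aPow γ n * (f₂ n * g₁ n)) (s₁ + s₂) *
          LSeries (fun n => aPow γ n * (f₁ n * g₂ n)) (s₁ + s₂) *
          LSeries (fun n => aPow γ n * (f₂ n * g₂ n)) (s₁ + s₂) /
          LSeries (fun n => aPow γ n * (f₁ n * f₂ n * g₁ n * g₂ n)) (2 * (s₁ + s₂)) := by
  have cf₁ := hcm f₁ (by simp)
  have cf₂ := hcm f₂ (by simp)
  have cg₁ := hcm g₁ (by simp)
  have cg₂ := hcm g₂ (by simp)
  have hX := hasSum_powTerm 1 one_pos _ s₁ h1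
  rw [aPow_one_mul] at hX
  have hY := hasSum_powTerm 1 one_pos 1 s₂ (by
    rw [LSeries.abscissaOfAbsConv_one]; exact_mod_cast hs₂)
  rw [aPow_one_mul, LSeries_one_eq_riemannZeta hs₂] at hY
  have hA := hasSum_powTerm γ hγ _ (s₁ + s₂) h2
  have hB := hasSum_powTerm γ hγ _ (s₁ + s₂) h3
  have hC := hasSum_powTerm γ hγ _ (s₁ + s₂) h4
  have hD := hasSum_powTerm γ hγ (fun n => f₁ n * f₂ n * g₁ n * g₂ n) (2 * (s₁ + s₂))
    (by simpa using h5)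
  set A := powTerm γ (fun n => f₂ n * g₁ n) (s₁ + s₂) with hAdef
  set B := powTerm γ (fun n => f₁ n * g₂ n) (s₁ + s₂) with hBdef
  set C := powTerm γ (fun n => f₂ n * g₂ n) (s₁ + s₂) with hCdef
  set D := powTerm γ (fun n => f₁ n * f₂ n * g₁ n * g₂ n) (2 * (s₁ + s₂)) with hDdef
  set SA := LSeries (fun n => aPow γ n * (f₂ n * g₁ n)) (s₁ + s₂)
  set SB := LSeries (fun n => aPow γ n * (f₁ n * g₂ n)) (s₁ + s₂)
  set SC := LSeries (fun n => aPow γ n * (f₂ n * g₂ n)) (s₁ + s₂)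
  set SD := LSeries (fun n => aPow γ n * (f₁ n * f₂ n * g₁ n * g₂ n)) (2 * (s₁ + s₂))
  have mA : ∀ a b, A (a * b) = A a * A b := powTerm_mul _ _ (fun a b ha hb => by
    simp only [cf₂ a b ha hb, cg₁ a b ha hb]; ring) _
  have mB : ∀ a b, B (a * b) = B a * B b := powTerm_mul _ _ (fun a b ha hb => by
    simp only [cf₁ a b ha hb, cg₂ a b ha hb]; ring) _
  have mD : ∀ a b, D (a * b) = D a * D b := powTerm_mul _ _ (fun a b ha hb => by
    simp only [cf₁ a b ha hb, cf₂ a b ha hb, cg₁ a b ha hb, cg₂ a b ha hb]; ring) _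
  have hDAB : ∀ k, D k = A k * B k := fun k => by
    have hk : (((k : ℕ) ^ γ : ℕ) : ℂ) ≠ 0 := by exact_mod_cast (pow_pos k.pos γ).ne'
    simp only [hAdef, hBdef, hDdef, powTerm]
    rw [show -(2 * (s₁ + s₂)) = -(s₁ + s₂) + -(s₁ + s₂) by ring, Complex.cpow_add _ _ hk]
    ring
  have hAB := hA.mul_complex hB
  have hK := (hAB.summable.subtype (fun q : ℕ+ × ℕ+ => Nat.Coprime q.1 q.2)).hasSum
  set K := ∑' q : {q : ℕ+ × ℕ+ // Nat.Coprime q.1 q.2},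
    ((fun x : ℕ+ × ℕ+ => A x.1 * B x.2) ∘ Subtype.val) q with hKdef
  have hDK : SA * SB = SD * K := hAB.unique <| hasSum_gcd_split hK hD fun k a b _ => by
    simp only [mA, mB, hDAB]; ring
  have hKeq : K = SA * SB / SD := by
    by_cases hSD : SD = 0
    · have hD1 : D 1 = 0 := by
        by_contra h
        exact sum_ne_zero_of_mul hD mD h hSD
      have hzero : ∀ a b, A a * B b = 0 := fun a b => by
        have e₁ := mA 1 a
        have e₂ := mB 1 b
        rw [one_mul] at e₁ e₂
        rw [e₁, e₂, mul_mul_mul_comm, ← hDAB, hD1, zero_mul]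
      rw [hSD, div_zero, hKdef]
      simp [hzero]
    · rw [hDK, mul_div_cancel_left₀ _ hSD]
  -- the `(d, e)`-part of the summand, after `n₁ = l m₁`, `n₂ = l m₂` with `l = lcmPow γ (d, e)`
  let G : ℕ+ × ℕ+ → ℂ := fun q =>
    (f₁ ((lcmPow γ q : ℕ) / (q.1 : ℕ) ^ γ) * f₂ ((q.1 : ℕ) ^ γ)) *
      (g₁ ((lcmPow γ q : ℕ) / (q.2 : ℕ) ^ γ) * g₂ ((q.2 : ℕ) ^ γ)) *
      ((lcmPow γ q : ℕ) : ℂ) ^ (-(s₁ + s₂))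
  have hG : HasSum G (SC * K) := hasSum_gcd_split hK hC fun k a b hab => by
    have hk := pow_pos k.pos γ
    have ha := pow_pos a.pos γ
    have hb := pow_pos b.pos γ
    have q₁ : (k : ℕ) ^ γ * ((a : ℕ) ^ γ * (b : ℕ) ^ γ) / ((k : ℕ) ^ γ * (a : ℕ) ^ γ)
        = (b : ℕ) ^ γ := by
      rw [← mul_assoc, Nat.mul_div_cancel_left _ (Nat.mul_pos hk ha)]
    have q₂ : (k : ℕ) ^ γ * ((a : ℕ) ^ γ * (b : ℕ) ^ γ) / ((k : ℕ) ^ γ * (b : ℕ) ^ γ)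
        = (a : ℕ) ^ γ := by
      rw [mul_left_comm, mul_comm, Nat.mul_div_cancel_left _ (Nat.mul_pos hk hb)]
    simp only [G, lcmPow_gcd_split γ k a b hab, PNat.mul_coe, mul_pow, q₁, q₂]
    rw [cf₂ _ _ hk ha, cg₂ _ _ hk hb, Nat.cast_mul, Complex.natCast_mul_natCast_cpow,
      Nat.cast_mul, Complex.natCast_mul_natCast_cpow]
    simp only [hAdef, hBdef, hCdef, powTerm]
    ring
  -- the expanded summand, indexed by `((n₁, n₂), (d, e))`
  let H : (ℕ+ × ℕ+) × (ℕ+ × ℕ+) → ℂ := fun t =>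
    ramTerm γ f₁ f₂ t.1.1 t.1.2 t.2.1 * ramTerm γ g₁ g₂ t.1.1 t.1.2 t.2.2 *
      (((t.1.1 : ℕ) : ℂ) ^ (-s₁) * ((t.1.2 : ℕ) : ℂ) ^ (-s₂))
  let ψ : (ℕ+ × ℕ+) × (ℕ+ × ℕ+) → (ℕ+ × ℕ+) × (ℕ+ × ℕ+) := fun t =>
    ((lcmPow γ t.1 * t.2.1, lcmPow γ t.1 * t.2.2), t.1)
  have hψ : Function.Injective ψ := by
    rintro ⟨q, m₁, m₂⟩ ⟨q', m₁', m₂'⟩ h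
    simp only [ψ, Prod.mk.injEq] at h
    obtain ⟨⟨e₁, e₂⟩, rfl⟩ := h
    rw [mul_right_inj] at e₁ e₂
    rw [e₁, e₂]
  have hoff : ∀ t ∉ Set.range ψ, H t = 0 := by
    rintro ⟨⟨n₁, n₂⟩, ⟨d, e⟩⟩ ht
    by_cases hd : (d : ℕ) ^ γ ∣ Nat.gcd n₁ n₂
    · by_cases he : (e : ℕ) ^ γ ∣ Nat.gcd n₁ n₂
      · exfalso
        have hl : (lcmPow γ (d, e) : ℕ) ∣ Nat.gcd n₁ n₂ := Nat.lcm_dvd hd he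
        obtain ⟨m₁, hm₁⟩ := PNat.dvd_iff.2 (hl.trans (Nat.gcd_dvd_left _ _))
        obtain ⟨m₂, hm₂⟩ := PNat.dvd_iff.2 (hl.trans (Nat.gcd_dvd_right _ _))
        exact ht ⟨((d, e), (m₁, m₂)), by simp only [ψ, ← hm₁, ← hm₂]⟩
      · simp [H, ramTerm, he]
    · simp [H, ramTerm, hd]
  have hH : HasSum H (SC * K * (LSeries (fun n => f₁ n * g₁ n) s₁ * riemannZeta s₂)) := by
    rw [← hψ.hasSum_iff hoff]
    convert hG.mul_complex (hX.mul_complex hY) using 1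
    funext ⟨⟨d, e⟩, ⟨m₁, m₂⟩⟩
    set l := lcmPow γ (d, e) with hl
    have dl : (d : ℕ) ^ γ ∣ (l : ℕ) := Nat.dvd_lcm_left _ _
    have el : (e : ℕ) ^ γ ∣ (l : ℕ) := Nat.dvd_lcm_right _ _
    have lg : (l : ℕ) ∣ Nat.gcd ((l * m₁ : ℕ+) : ℕ) ((l * m₂ : ℕ+) : ℕ) := by
      rw [PNat.mul_coe, PNat.mul_coe]
      exact Nat.dvd_gcd (dvd_mul_right _ _) (dvd_mul_right _ _)
    have pd : 0 < (l : ℕ) / (d : ℕ) ^ γ := Nat.div_pos (Nat.le_of_dvd l.pos dl) (pow_pos d.pos γ)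
    have pe : 0 < (l : ℕ) / (e : ℕ) ^ γ := Nat.div_pos (Nat.le_of_dvd l.pos el) (pow_pos e.pos γ)
    have hl0 : ((l : ℕ) : ℂ) ≠ 0 := by exact_mod_cast l.ne_zero
    simp only [Function.comp_apply, H, ψ, ramTerm, G, ← hl]
    rw [if_pos (dl.trans lg), if_pos (el.trans lg), PNat.mul_coe, PNat.mul_coe,
      Nat.mul_div_right_comm dl, Nat.mul_div_right_comm el, cf₁ _ _ pd m₁.pos,
      cg₁ _ _ pe m₁.pos, Nat.cast_mul, Nat.cast_mul, Complex.natCast_mul_natCast_cpow,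
      Complex.natCast_mul_natCast_cpow, neg_add, Complex.cpow_add _ _ hl0]
    simp only [powTerm, pow_one, Pi.one_apply]
    ring
  have hfinal := hH.prod_fiberwise fun p =>
    ((hasSum_ramTerm γ hγ f₁ f₂ p.1 p.2).mul_complex
      (hasSum_ramTerm γ hγ g₁ g₂ p.1 p.2)).mul_right
        (((p.1 : ℕ) : ℂ) ^ (-s₁) * ((p.2 : ℕ) : ℂ) ^ (-s₂))
  simp only [← mul_assoc] at hfinal
  rw [hfinal.tsum_eq, hKeq]
  ring
end

section
/- Let γ ∈ ℕ and let f_1, f_2, g_1, g_2 be completely multiplicative arithmetic functions. Then L(s; (f_2 *_γ f_1)(g_2 *_γ g_1)) = L(s; f_1g_1) L(s; (f_2g_1)^{[γ]}) L(s; (f_1g_2)^{[γ]}) L(s; (f_2g_2)^{[γ]}) / L(2s; (f_1f_2g_1g_2)^{[γ]}) for Re(s) > max{σ(f_1g_1), σ(f_2g_1), σ(f_1g_2), σ(f_2g_2), σ(f_1f_2g_1g_2)/2}. -/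
/-!
The proof is a rearrangement of absolutely convergent sums. Expanding both γ-convolutions, the
left-hand side is a sum over triples `(n, d, e)` of positive integers with `d ^ γ ∣ n` and
`e ^ γ ∣ n`. Writing `d = k u`, `e = k v` with `u, v` coprime, the two divisibility conditions say
exactly that `n = m (k u v) ^ γ` (`tripleMap_injective`, `mem_range_tripleMap`). Complete
multiplicativity makes the summand factor as `A m * R k * P u * Q v`, where `A`, `R`, `P`, `Q` are
the summands of the series of `f₁g₁`, `(f₂g₂)^{[γ]}`, `(f₂g₁)^{[γ]}` and `(f₁g₂)^{[γ]}`, so that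
the left-hand side is `∑ A * ∑ R * ∑_{(u,v)=1} P u * Q v` (`LSeries_gconv_mul_gconv`).

Splitting off the gcd in the unrestricted double sum gives
`∑ P * ∑ Q = (∑_k P k * Q k) * ∑_{(u,v)=1} P u * Q v` (`tsum_mul_tsum_eq_diag_mul_coprime`), and
`∑_k P k * Q k` is the denominator `L(2s; (f₁f₂g₁g₂)^{[γ]})`. It is nonzero by its Euler product
unless one of the four functions vanishes identically on the positive integers, in which case
both sides are zero.
-/

open scoped BigOperators

/-- The pairs `(u, v)` of coprime positive integers. -/
abbrev CoprimePair : Type := {p : ℕ+ × ℕ+ // Nat.Coprime (p.1 : ℕ) (p.2 : ℕ)}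

/-- `(k, (u, v)) ↦ (k u, k v)`: every pair of positive integers is uniquely a multiple of a
coprime pair. -/
def scalePair (x : ℕ+ × CoprimePair) : ℕ+ × ℕ+ := (x.1 * x.2.1.1, x.1 * x.2.1.2)

lemma scalePair_bijective : Function.Bijective scalePair := by
  constructor
  · rintro ⟨k, ⟨⟨u, v⟩, h⟩⟩ ⟨k', ⟨⟨u', v'⟩, h'⟩⟩ e
    simp only [scalePair, Prod.mk.injEq] at e
    obtain ⟨e1, e2⟩ := e
    have e1' : (k : ℕ) * u = k' * u' := by exact_mod_cast congrArg PNat.val e1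
    have e2' : (k : ℕ) * v = k' * v' := by exact_mod_cast congrArg PNat.val e2
    -- the scaling factor is recovered as the gcd of the two coordinates
    have hk : (k : ℕ) = k' := by
      have a : Nat.gcd ((k : ℕ) * u) (k * v) = k := by
        rw [Nat.gcd_mul_left, Nat.Coprime.gcd_eq_one h, mul_one]
      have b : Nat.gcd ((k' : ℕ) * u') (k' * v') = k' := by
        rw [Nat.gcd_mul_left, Nat.Coprime.gcd_eq_one h', mul_one]
      rw [← a, ← b, e1', e2']
    have hk' : k = k' := PNat.eq hk
    subst hk'
    have := mul_left_cancel e1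
    have := mul_left_cancel e2
    subst_vars
    rfl
  · rintro ⟨d, e⟩
    have hg : 0 < Nat.gcd d e := Nat.gcd_pos_of_pos_left _ d.pos
    have hd := Nat.div_mul_cancel (Nat.gcd_dvd_left d e)
    have he := Nat.div_mul_cancel (Nat.gcd_dvd_right d e)
    have hdp : 0 < (d : ℕ) / Nat.gcd d e :=
      Nat.div_pos (Nat.le_of_dvd d.pos (Nat.gcd_dvd_left d e)) hg
    have hep : 0 < (e : ℕ) / Nat.gcd d e :=
      Nat.div_pos (Nat.le_of_dvd e.pos (Nat.gcd_dvd_right d e)) hg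
    have hco := Nat.coprime_div_gcd_div_gcd hg
    generalize (d : ℕ) / Nat.gcd d e = u at *
    generalize (e : ℕ) / Nat.gcd d e = v at *
    generalize Nat.gcd d e = k at *
    lift u to ℕ+ using hdp
    lift v to ℕ+ using hep
    lift k to ℕ+ using hg
    refine ⟨(k, ⟨(u, v), hco⟩), ?_⟩
    simp only [scalePair, Prod.mk.injEq]
    constructor <;> apply PNat.eq <;> rw [PNat.mul_coe, mul_comm]
    · exact hd
    · exact he

lemma summable_coprimePair {P Q : ℕ+ → ℂ} (hP : Summable P) (hQ : Summable Q) :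
    Summable (fun c : CoprimePair => P c.1.1 * Q c.1.2) :=
  (summable_mul_of_summable_norm hP.norm hQ.norm).comp_injective
    (i := fun c : CoprimePair => c.1) Subtype.val_injective

/-- Splitting off the gcd: the full double sum is the sum over coprime pairs times the diagonal
sum. -/
lemma tsum_mul_tsum_eq_diag_mul_coprime {P Q : ℕ+ → ℂ} (hP : Summable P) (hQ : Summable Q)
    (mP : ∀ a b, P (a * b) = P a * P b) (mQ : ∀ a b, Q (a * b) = Q a * Q b) :
    (∑' u, P u) * (∑' v, Q v) =
      (∑' k, P k * Q k) * ∑' c : CoprimePair, P c.1.1 * Q c.1.2 := by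
  have hd : Summable (fun k => P k * Q k) :=
    (summable_mul_of_summable_norm hP.norm hQ.norm).comp_injective
      (i := fun k : ℕ+ => (k, k)) (fun a b h => (Prod.mk.inj h).1)
  rw [tsum_mul_tsum_of_summable_norm hP.norm hQ.norm,
    tsum_mul_tsum_of_summable_norm hd.norm (summable_coprimePair hP hQ).norm,
    ← (Equiv.ofBijective _ scalePair_bijective).tsum_eq]
  refine tsum_congr fun x => ?_
  simp only [Equiv.ofBijective_apply, scalePair, mP, mQ]
  ring

/-- A completely multiplicative absolutely convergent sum is nonzero, by its Euler product. -/
lemma tsum_ne_zero_of_mul {h : ℕ+ → ℂ} (hs : Summable h) (h1 : h 1 = 1)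
    (hm : ∀ a b, h (a * b) = h a * h b) : ∑' n, h n ≠ 0 := by
  let F : ℕ →*₀ ℂ :=
    { toFun := fun n => if hn : 0 < n then h ⟨n, hn⟩ else 0
      map_zero' := by simp
      map_one' := by simpa using h1
      map_mul' := by
        intro a b
        rcases Nat.eq_zero_or_pos a with rfl | ha
        · simp
        rcases Nat.eq_zero_or_pos b with rfl | hb
        · simp
        simp only [ha, hb, Nat.mul_pos ha hb, dif_pos]
        exact hm ⟨a, ha⟩ ⟨b, hb⟩ }
  have hF : ∀ n : ℕ+, F n = h n := fun n => dif_pos n.pos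
  have hsupp : ∀ n : ℕ, n ∉ Set.range PNat.val → F n = 0 := by
    intro n hn
    rcases Nat.eq_zero_or_pos n with rfl | hp
    · simp
    · exact absurd ⟨⟨n, hp⟩, rfl⟩ hn
  have hH : HasSum (fun n => F n) (∑' n, h n) := by
    rw [← PNat.coe_injective.hasSum_iff hsupp]
    simpa only [Function.comp_def, hF] using hs.hasSum
  have := EulerProduct.exp_tsum_primes_log_eq_tsum (f := F) hH.summable.norm
  rw [← hH.tsum_eq, ← this]
  exact Complex.exp_ne_zero _

lemma LSeries_eq_tsum_pnat (F : ℕ → ℂ) (s : ℂ) :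
    LSeries F s = ∑' n : ℕ+, F n / ((n : ℕ) : ℂ) ^ s := by
  rw [LSeries, ← PNat.coe_injective.tsum_eq]
  · exact tsum_congr fun n => LSeries.term_of_ne_zero n.ne_zero _ _
  · intro n hn
    rcases Nat.eq_zero_or_pos n with rfl | hp
    · simp at hn
    · exact ⟨⟨n, hp⟩, rfl⟩

lemma pnat_pow_injective {γ : ℕ} (hγ : 0 < γ) : Function.Injective (fun n : ℕ+ => n ^ γ) := by
  intro a b h
  apply PNat.eq
  have : (a : ℕ) ^ γ = (b : ℕ) ^ γ := by exact_mod_cast congrArg PNat.val h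
  exact Nat.pow_left_injective hγ.ne' this

lemma LSeries_aPow {γ : ℕ} (hγ : 0 < γ) (F : ℕ → ℂ) (s : ℂ) :
    LSeries (fun n => aPow γ n * F n) s =
      ∑' n : ℕ+, F ((n ^ γ : ℕ+) : ℕ) / (((n ^ γ : ℕ+) : ℕ) : ℂ) ^ s := by
  rw [LSeries_eq_tsum_pnat, ← (pnat_pow_injective hγ).tsum_eq]
  · refine tsum_congr fun n => ?_
    have : aPow γ ((n ^ γ : ℕ+) : ℕ) = 1 := if_pos ⟨n, n.pos, by simp⟩
    rw [this, one_mul]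
  · intro n hn
    by_contra hc
    apply hn
    have : aPow γ n = 0 := by
      refine if_neg ?_
      rintro ⟨d, hd, e⟩
      lift d to ℕ+ using hd
      exact hc ⟨d, PNat.eq (by rw [e, PNat.pow_coe])⟩
    simp [this]

lemma summable_pnat_of_abscissa_lt {F : ℕ → ℂ} {s : ℂ}
    (h : LSeries.abscissaOfAbsConv F < (s.re : EReal)) :
    Summable (fun n : ℕ+ => F n / ((n : ℕ) : ℂ) ^ s) := by
  have := (LSeriesSummable_of_abscissaOfAbsConv_lt_re h).comp_injective PNat.coe_injective
  refine this.congr fun n => ?_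
  exact LSeries.term_of_ne_zero n.ne_zero _ _

/-- `(m, k, (u, v)) ↦ (n, d, e)` with `d = k u`, `e = k v` and `n = m (k u v) ^ γ`, a
parametrization of the triples with `d ^ γ ∣ n` and `e ^ γ ∣ n`; here `k u v = lcm(d, e)`. -/
def tripleMap (γ : ℕ) (x : ℕ+ × (ℕ+ × CoprimePair)) : ℕ+ × (ℕ+ × ℕ+) :=
  (x.1 * (x.2.1 * x.2.2.1.1 * x.2.2.1.2) ^ γ, scalePair x.2)

lemma tripleMap_injective (γ : ℕ) : Function.Injective (tripleMap γ) := by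
  rintro ⟨m, y⟩ ⟨m', y'⟩ h
  simp only [tripleMap, Prod.mk.injEq] at h
  obtain ⟨h1, h2⟩ := h
  obtain rfl := scalePair_bijective.1 h2
  rw [mul_left_injective _ h1]

lemma mem_range_tripleMap {γ : ℕ} {n d e : ℕ+} (hd : (d : ℕ) ^ γ ∣ n) (he : (e : ℕ) ^ γ ∣ n) :
    (n, d, e) ∈ Set.range (tripleMap γ) := by
  obtain ⟨⟨k, ⟨⟨u, v⟩, huv⟩⟩, hx⟩ := scalePair_bijective.2 (d, e)
  simp only [scalePair, Prod.mk.injEq] at hx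
  obtain ⟨rfl, rfl⟩ := hx
  have key : (((k * u * v) ^ γ : ℕ+) : ℕ) ∣ n := by
    obtain ⟨t, ht⟩ : (k : ℕ) ^ γ ∣ n := by
      refine dvd_trans ?_ hd
      rw [PNat.mul_coe, mul_pow]
      exact dvd_mul_right _ _
    have hk : 0 < (k : ℕ) ^ γ := pow_pos k.pos _
    rw [PNat.mul_coe, mul_pow, ht] at hd he
    have h1 := Nat.dvd_of_mul_dvd_mul_left hk hd
    have h2 := Nat.dvd_of_mul_dvd_mul_left hk he
    have h3 := Nat.Coprime.mul_dvd_of_dvd_of_dvd (Nat.Coprime.pow γ γ huv) h1 h2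
    rw [PNat.pow_coe, PNat.mul_coe, PNat.mul_coe, mul_pow, mul_pow, ht, mul_assoc]
    exact mul_dvd_mul_left _ h3
  obtain ⟨m, hm⟩ := key
  have hmp : 0 < m := by
    rcases Nat.eq_zero_or_pos m with rfl | h
    · simp at hm
    · exact h
  lift m to ℕ+ using hmp
  refine ⟨(m, k, ⟨(u, v), huv⟩), ?_⟩
  simp only [tripleMap, scalePair, Prod.mk.injEq, and_true]
  apply PNat.eq
  rw [hm, PNat.mul_coe, mul_comm]

/-- The summand of the product of two γ-convolutions, as a function of `(n, d, e)`. -/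
noncomputable def tripleTerm (γ : ℕ) (f₁ f₂ g₁ g₂ : ℕ → ℂ) (s : ℂ) (x : ℕ+ × (ℕ+ × ℕ+)) : ℂ :=
  if (x.2.1 : ℕ) ^ γ ∣ x.1 ∧ (x.2.2 : ℕ) ^ γ ∣ x.1 then
    (f₁ (x.1 / (x.2.1 : ℕ) ^ γ) * f₂ ((x.2.1 : ℕ) ^ γ)) *
      (g₁ (x.1 / (x.2.2 : ℕ) ^ γ) * g₂ ((x.2.2 : ℕ) ^ γ)) / ((x.1 : ℕ) : ℂ) ^ s
  else 0

/-- A γ-convolution as an unconditional sum over all positive integers. -/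
lemma hasSum_gconv {γ : ℕ} (hγ : 0 < γ) (f g : ℕ → ℂ) (n : ℕ+) :
    HasSum (fun d : ℕ+ => if (d : ℕ) ^ γ ∣ n then f (n / (d : ℕ) ^ γ) * g ((d : ℕ) ^ γ) else 0)
      (gconv γ g f n) := by
  have hz : ∀ d : ℕ, d ∉ Set.range PNat.val →
      (if d ^ γ ∣ n then f (n / d ^ γ) * g (d ^ γ) else 0) = 0 := by
    intro d hd
    rcases Nat.eq_zero_or_pos d with rfl | hp
    · rw [zero_pow hγ.ne', if_neg]
      simp
    · exact absurd ⟨⟨d, hp⟩, rfl⟩ hd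
  have := (PNat.coe_injective.hasSum_iff hz (a := gconv γ g f n)).2 ?_
  · exact this
  rw [gconv, Finset.sum_filter]
  apply hasSum_sum_of_ne_finset_zero
  intro d hd
  rw [if_neg]
  intro h
  exact hd (Nat.mem_divisors.2 ⟨dvd_trans (dvd_pow_self d hγ.ne') h, n.ne_zero⟩)

lemma hasSum_prod_mul {f g : ℕ+ → ℂ} {a b : ℂ} (hf : HasSum f a) (hg : HasSum g b) :
    HasSum (fun y : ℕ+ × ℕ+ => f y.1 * g y.2) (a * b) :=
  hf.mul hg (summable_mul_of_summable_norm hf.summable.norm hg.summable.norm)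

lemma hasSum_tripleTerm_fiber {γ : ℕ} (hγ : 0 < γ) (f₁ f₂ g₁ g₂ : ℕ → ℂ) (s : ℂ) (n : ℕ+) :
    HasSum (fun y => tripleTerm γ f₁ f₂ g₁ g₂ s (n, y))
      (gconv γ f₂ f₁ n * gconv γ g₂ g₁ n / ((n : ℕ) : ℂ) ^ s) := by
  have a := hasSum_gconv hγ f₁ f₂ n
  have b := hasSum_gconv hγ g₁ g₂ n
  have hab := hasSum_prod_mul a b
  refine (hab.div_const (((n : ℕ) : ℂ) ^ s)).congr_fun fun y => ?_
  simp only [tripleTerm]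
  rw [ite_and]
  by_cases h₁ : (y.1 : ℕ) ^ γ ∣ n
  · by_cases h₂ : (y.2 : ℕ) ^ γ ∣ n
    · rw [if_pos h₁, if_pos h₂, if_pos h₁, if_pos h₂]
    · rw [if_pos h₁, if_neg h₂, if_neg h₂, mul_zero, zero_div]
  · rw [if_neg h₁, if_neg h₁, zero_mul, zero_div]

/-- The dictionary `(n, d, e) ↔ (m, k, (u, v))` turns the Dirichlet series of the product of
γ-convolutions into a product of two full sums and one sum over coprime pairs. -/
lemma LSeries_gconv_mul_gconv {γ : ℕ} (hγ : 0 < γ) {f₁ f₂ g₁ g₂ : ℕ → ℂ} {s : ℂ}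
    {A P Q R : ℕ+ → ℂ} (hA : Summable A) (hP : Summable P) (hQ : Summable Q) (hR : Summable R)
    (hterm : ∀ x, tripleTerm γ f₁ f₂ g₁ g₂ s (tripleMap γ x) =
      A x.1 * (R x.2.1 * (P x.2.2.1.1 * Q x.2.2.1.2))) :
    LSeries (fun n => gconv γ f₂ f₁ n * gconv γ g₂ g₁ n) s =
      (∑' m, A m) * ((∑' k, R k) * ∑' c : CoprimePair, P c.1.1 * Q c.1.2) := by
  have hS := summable_coprimePair hP hQ
  have hRS := summable_mul_of_summable_norm hR.norm hS.norm
  have hARS := summable_mul_of_summable_norm hA.norm hRS.norm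
  have hz : ∀ x, x ∉ Set.range (tripleMap γ) → tripleTerm γ f₁ f₂ g₁ g₂ s x = 0 := by
    rintro ⟨n, d, e⟩ hx
    refine if_neg ?_
    rintro ⟨hd, he⟩
    exact hx (mem_range_tripleMap hd he)
  have hT := hARS.hasSum
  have hT' : HasSum (tripleTerm γ f₁ f₂ g₁ g₂ s) _ :=
    ((tripleMap_injective γ).hasSum_iff hz).1 (by
      rw [show tripleTerm γ f₁ f₂ g₁ g₂ s ∘ tripleMap γ = _ from funext hterm]
      exact hT)
  rw [LSeries_eq_tsum_pnat,
    (hT'.prod_fiberwise (hasSum_tripleTerm_fiber hγ f₁ f₂ g₁ g₂ s)).tsum_eq,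
    tsum_mul_tsum_of_summable_norm hR.norm hS.norm,
    tsum_mul_tsum_of_summable_norm hA.norm hRS.norm]

/-- The Borwein–Choi formula (3.7): for completely multiplicative
`f_1,f_2,g_1,g_2`,
`L(s; (f_2 *_γ f_1)(g_2 *_γ g_1))
 = L(s;f_1g_1) L(s;(f_2g_1)^{[γ]}) L(s;(f_1g_2)^{[γ]}) L(s;(f_2g_2)^{[γ]})
     / L(2s;(f_1f_2g_1g_2)^{[γ]})`
for `Re(s) > max{σ(f_1g_1), σ(f_2g_1), σ(f_1g_2), σ(f_2g_2), σ(f_1f_2g_1g_2)/2}`. -/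
theorem stmt_12 (γ : ℕ) (hγ : 0 < γ) (f₁ f₂ g₁ g₂ : ℕ → ℂ)
    (hcm : ∀ h ∈ [f₁, f₂, g₁, g₂], ∀ a b : ℕ, 0 < a → 0 < b →
      h (a * b) = h a * h b)
    (s : ℂ)
    (h1 : LSeries.abscissaOfAbsConv (fun n => f₁ n * g₁ n) < (s.re : EReal))
    (h2 : LSeries.abscissaOfAbsConv (fun n => f₂ n * g₁ n) < (s.re : EReal))
    (h3 : LSeries.abscissaOfAbsConv (fun n => f₁ n * g₂ n) < (s.re : EReal))
    (h4 : LSeries.abscissaOfAbsConv (fun n => f₂ n * g₂ n) < (s.re : EReal))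
    (h5 : LSeries.abscissaOfAbsConv (fun n => f₁ n * f₂ n * g₁ n * g₂ n)
      < ((2 * s.re : ℝ) : EReal)) :
    LSeries (fun n => gconv γ f₂ f₁ n * gconv γ g₂ g₁ n) s
      = LSeries (fun n => f₁ n * g₁ n) s *
          LSeries (fun n => aPow γ n * (f₂ n * g₁ n)) s *
          LSeries (fun n => aPow γ n * (f₁ n * g₂ n)) s *
          LSeries (fun n => aPow γ n * (f₂ n * g₂ n)) s /
          LSeries (fun n => aPow γ n * (f₁ n * f₂ n * g₁ n * g₂ n)) (2 * s) := by
  have mf₁ : ∀ a b : ℕ+, f₁ (a * b : ℕ) = f₁ a * f₁ b := fun a b =>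
    hcm f₁ (by simp) a b a.pos b.pos
  have mf₂ : ∀ a b : ℕ+, f₂ (a * b : ℕ) = f₂ a * f₂ b := fun a b =>
    hcm f₂ (by simp) a b a.pos b.pos
  have mg₁ : ∀ a b : ℕ+, g₁ (a * b : ℕ) = g₁ a * g₁ b := fun a b =>
    hcm g₁ (by simp) a b a.pos b.pos
  have mg₂ : ∀ a b : ℕ+, g₂ (a * b : ℕ) = g₂ a * g₂ b := fun a b =>
    hcm g₂ (by simp) a b a.pos b.pos
  have mw : ∀ a b : ℕ+, (((a * b : ℕ+) : ℕ) : ℂ) ^ s = ((a : ℕ) : ℂ) ^ s * ((b : ℕ) : ℂ) ^ s := by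
    intro a b
    rw [PNat.mul_coe, Nat.cast_mul, Complex.natCast_mul_natCast_cpow]
  let A : ℕ+ → ℂ := fun n => f₁ n * g₁ n / ((n : ℕ) : ℂ) ^ s
  let P : ℕ+ → ℂ := fun n =>
    f₂ (n ^ γ : ℕ+) * g₁ (n ^ γ : ℕ+) / (((n ^ γ : ℕ+) : ℕ) : ℂ) ^ s
  let Q : ℕ+ → ℂ := fun n =>
    f₁ (n ^ γ : ℕ+) * g₂ (n ^ γ : ℕ+) / (((n ^ γ : ℕ+) : ℕ) : ℂ) ^ s
  let R : ℕ+ → ℂ := fun n =>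
    f₂ (n ^ γ : ℕ+) * g₂ (n ^ γ : ℕ+) / (((n ^ γ : ℕ+) : ℕ) : ℂ) ^ s
  have hA : Summable A := summable_pnat_of_abscissa_lt (F := fun n => f₁ n * g₁ n) h1
  have hP : Summable P :=
    (summable_pnat_of_abscissa_lt (F := fun n => f₂ n * g₁ n) h2).comp_injective
      (pnat_pow_injective hγ)
  have hQ : Summable Q :=
    (summable_pnat_of_abscissa_lt (F := fun n => f₁ n * g₂ n) h3).comp_injective
      (pnat_pow_injective hγ)
  have hR : Summable R :=
    (summable_pnat_of_abscissa_lt (F := fun n => f₂ n * g₂ n) h4).comp_injective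
      (pnat_pow_injective hγ)
  have mP : ∀ a b, P (a * b) = P a * P b := by
    intro a b
    simp only [P, mul_pow, mw]
    simp only [PNat.mul_coe, mf₂, mg₁]
    ring
  have mQ : ∀ a b, Q (a * b) = Q a * Q b := by
    intro a b
    simp only [Q, mul_pow, mw]
    simp only [PNat.mul_coe, mf₁, mg₂]
    ring
  have hD : LSeries (fun n => aPow γ n * (f₁ n * f₂ n * g₁ n * g₂ n)) (2 * s) =
      ∑' k, P k * Q k := by
    rw [LSeries_aPow hγ]
    refine tsum_congr fun k => ?_
    simp only [P, Q]
    have : (((k ^ γ : ℕ+) : ℕ) : ℂ) ^ (2 * s) =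
        (((k ^ γ : ℕ+) : ℕ) : ℂ) ^ s * (((k ^ γ : ℕ+) : ℕ) : ℂ) ^ s := by
      rw [two_mul, Complex.cpow_add _ _ (by exact_mod_cast PNat.ne_zero _)]
    rw [this]
    ring
  have hterm : ∀ x, tripleTerm γ f₁ f₂ g₁ g₂ s (tripleMap γ x) =
      A x.1 * (R x.2.1 * (P x.2.2.1.1 * Q x.2.2.1.2)) := by
    rintro ⟨m, k, ⟨⟨u, v⟩, huv⟩⟩
    have e1 : ((m * (k * u * v) ^ γ : ℕ+) : ℕ) =
        ((m * v ^ γ : ℕ+) : ℕ) * ((k * u : ℕ+) : ℕ) ^ γ := by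
      push_cast
      ring
    have e2 : ((m * (k * u * v) ^ γ : ℕ+) : ℕ) =
        ((m * u ^ γ : ℕ+) : ℕ) * ((k * v : ℕ+) : ℕ) ^ γ := by
      push_cast
      ring
    have q1 : ((m * (k * u * v) ^ γ : ℕ+) : ℕ) / ((k * u : ℕ+) : ℕ) ^ γ =
        ((m * v ^ γ : ℕ+) : ℕ) := by
      rw [e1, Nat.mul_div_cancel _ (pow_pos (PNat.pos _) _)]
    have q2 : ((m * (k * u * v) ^ γ : ℕ+) : ℕ) / ((k * v : ℕ+) : ℕ) ^ γ =
        ((m * u ^ γ : ℕ+) : ℕ) := by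
      rw [e2, Nat.mul_div_cancel _ (pow_pos (PNat.pos _) _)]
    simp only [tripleTerm, tripleMap, scalePair, q1, q2]
    rw [if_pos ⟨e1 ▸ dvd_mul_left _ _, e2 ▸ dvd_mul_left _ _⟩]
    simp only [A, P, Q, R, ← PNat.pow_coe, mul_pow, mw]
    simp only [PNat.mul_coe, mf₁, mf₂, mg₁, mg₂]
    ring
  rw [LSeries_gconv_mul_gconv hγ hA hP hQ hR hterm, hD, LSeries_eq_tsum_pnat,
    LSeries_aPow hγ, LSeries_aPow hγ, LSeries_aPow hγ]
  change (∑' m, A m) * ((∑' k, R k) * ∑' c : CoprimePair, P c.1.1 * Q c.1.2) =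
    (∑' m, A m) * (∑' u, P u) * (∑' v, Q v) * (∑' k, R k) / ∑' k, P k * Q k
  have hPQ := tsum_mul_tsum_eq_diag_mul_coprime hP hQ mP mQ
  have hd : Summable (fun k => P k * Q k) :=
    (summable_mul_of_summable_norm hP.norm hQ.norm).comp_injective
      (i := fun k : ℕ+ => (k, k)) (fun a b h => (Prod.mk.inj h).1)
  by_cases hz : f₁ 1 * g₁ 1 = 0 ∨ f₂ 1 * g₂ 1 = 0
  · -- One of the functions vanishes identically, and so do both sides; the denominator is then
    -- the junk case `x / 0`.
    rcases hz with hz | hz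
    · have : ∀ n, A n = 0 := by
        intro n
        have a := mf₁ 1 n
        have b := mg₁ 1 n
        simp only [PNat.one_coe, one_mul] at a b
        simp only [A]
        rw [a, b, show f₁ 1 * f₁ n * (g₁ 1 * g₁ n) = f₁ 1 * g₁ 1 * (f₁ n * g₁ n) by ring, hz]
        simp
      simp [this]
    · have : ∀ n, R n = 0 := by
        intro n
        have a := mf₂ 1 (n ^ γ)
        have b := mg₂ 1 (n ^ γ)
        rw [PNat.one_coe, one_mul] at a b
        simp only [R]
        rw [a, b, show ∀ x y : ℂ, f₂ 1 * x * (g₂ 1 * y) = f₂ 1 * g₂ 1 * (x * y) by intros; ring, hz]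
        simp
      simp [this]
  · push Not at hz
    obtain ⟨hz1, hz2⟩ := hz
    have one_of : ∀ f : ℕ → ℂ, (∀ a b : ℕ+, f (a * b : ℕ) = f a * f b) → f 1 ≠ 0 → f 1 = 1 := by
      intro f mf h
      have := mf 1 1
      simp only [PNat.one_coe, mul_one] at this
      exact mul_left_cancel₀ h (by rw [← this, mul_one])
    have o1 := one_of f₁ mf₁ (left_ne_zero_of_mul hz1)
    have o2 := one_of g₁ mg₁ (right_ne_zero_of_mul hz1)
    have o3 := one_of f₂ mf₂ (left_ne_zero_of_mul hz2)
    have o4 := one_of g₂ mg₂ (right_ne_zero_of_mul hz2)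
    have hne : ∑' k, P k * Q k ≠ 0 := by
      refine tsum_ne_zero_of_mul hd ?_ ?_
      · simp [P, Q, o1, o2, o3, o4]
      · intro a b
        rw [mP, mQ]
        ring
    rw [eq_div_iff hne]
    linear_combination (-(∑' m, A m) * ∑' k, R k) * hPQ
end

section
/- Let r = (r_1,…,r_m) ∈ ℕ^m and k = (k_1,…,k_m) ∈ ℕ^m, and let F(r; n_1,…,n_m) be a function of tuples n_j ∈ ℕ^{k_j} (j = 1,…,m). Then F is even mod r^{(k)} if and only if it has a representation F(r; n_1,…,n_m) = Σ α_r(d_1,…,d_m) ∏_{j=1}^m ∏_{l=1}^{k_j} c(d_{j,l}, n_{j,l}), the sum over all tuples d_j ∈ ℕ^{k_j} with every component of d_j dividing r_j; moreover in that case the coefficients are uniquely determined by α_r(d_1,…,d_m) = (r_1^{k_1}⋯r_m^{k_m})^{-1} Σ F(r; δ_1,…,δ_m) ∏_{j=1}^m ∏_{l=1}^{k_j} c(r_j/δ_{j,l}, r_j/d_{j,l}), the sum over all tuples δ_j ∈ ℕ^{k_j} with every component of δ_j dividing r_j. -/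
/-!
Everything follows from two one-variable orthogonality relations, for `d, e, δ, n ∣ r`:
`∑_{δ ∣ r} c(d, δ) c(r/δ, r/e) = r [d = e]` (`ram_orth`) and
`∑_{d ∣ r} c(r/δ, r/d) c(d, n) = r [δ = n]` (`ram_orth'`).

Let `Z` and `M` be the zeta and Möbius matrices of the divisor lattice of `r`, which are mutually
inverse by Möbius inversion. The definition of the Ramanujan sum says that the matrix `c(d, n)` is
`M A Zᵀ` with `A = diag(a)`, and, after reversing the lattice by `b ↦ r/b`, that the matrix
`c(r/δ, r/d)` is `Mᵀ (r A⁻¹) Z`. Their product telescopes to `r` times the identity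
(`ram_mat_mul`), and since the matrices are square the product in the other order does too.

Sums over tuples of divisors of products of one-variable factors split into products of
one-variable sums, so both relations carry over to tuples (`tuple_orth`). One of them gives the
expansion of an even function (at the tuple `gcd(n, r)`), the other the formula for the
coefficients. Conversely, for `d ∣ r`, `c(d, n)` depends only on `gcd(n, r)` (`ramCC_gcd`).
-/

open scoped BigOperators

/-- The incidence matrix of the divisor lattice of `r`: `Z n a = 1` if `a ∣ n`, else `0`. -/
noncomputable def zetaMat (r : ℕ) : Matrix r.divisors r.divisors ℂ :=
  fun n a => if (a : ℕ) ∣ n then 1 else 0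

/-- The Möbius matrix of the divisor lattice of `r`: `M n a = μ(n / a)` if `a ∣ n`, else `0`. -/
noncomputable def moebMat (r : ℕ) : Matrix r.divisors r.divisors ℂ :=
  fun n a => if (a : ℕ) ∣ n then ((ArithmeticFunction.moebius ((n : ℕ) / a) : ℤ) : ℂ) else 0

lemma sum_moebius_divisors (n : ℕ) :
    ∑ d ∈ n.divisors, ((ArithmeticFunction.moebius d : ℤ) : ℂ) = if n = 1 then 1 else 0 := by
  have h := ArithmeticFunction.coe_mul_zeta_apply (f := ArithmeticFunction.moebius) (x := n)
  rw [ArithmeticFunction.moebius_mul_coe_zeta, ArithmeticFunction.one_apply] at h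
  have hcast := congrArg (fun z : ℤ => (z : ℂ)) h
  push_cast at hcast
  exact hcast.symm

/-- Möbius inversion on the divisor lattice, in matrix form. -/
lemma zetaMat_mul_moebMat (r : ℕ) : zetaMat r * moebMat r = 1 := by
  ext ⟨n, hn⟩ ⟨d, hd⟩
  rw [Matrix.mul_apply, Matrix.one_apply]
  simp only [zetaMat, moebMat, Subtype.mk.injEq]
  rw [Finset.sum_coe_sort r.divisors (fun a => (if a ∣ n then (1 : ℂ) else 0) *
    if d ∣ a then ((ArithmeticFunction.moebius (a / d) : ℤ) : ℂ) else 0)]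
  obtain ⟨hnr, hr⟩ := Nat.mem_divisors.1 hn
  have hdpos : 0 < d := Nat.pos_of_mem_divisors hd
  have hnpos : 0 < n := Nat.pos_of_mem_divisors hn
  by_cases hdn : d ∣ n
  · obtain ⟨e, rfl⟩ := hdn
    have hepos : 0 < e := Nat.pos_of_mul_pos_left hnpos
    -- Only the `a = d * b` with `b ∣ e` contribute.
    have key : ∑ b ∈ e.divisors, ((ArithmeticFunction.moebius b : ℤ) : ℂ) =
        ∑ a ∈ r.divisors, (if a ∣ d * e then (1 : ℂ) else 0) *
          if d ∣ a then ((ArithmeticFunction.moebius (a / d) : ℤ) : ℂ) else 0 := by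
      refine Finset.sum_of_injOn (fun b => d * b) ?_ ?_ ?_ ?_
      · intro a _ b _ h
        exact Nat.eq_of_mul_eq_mul_left hdpos h
      · intro b hb
        have hb' := Nat.dvd_of_mem_divisors (Finset.mem_coe.1 hb)
        exact Finset.mem_coe.2 (Nat.mem_divisors.2 ⟨(mul_dvd_mul_left d hb').trans hnr, hr⟩)
      · intro a _ ha
        by_cases h1 : a ∣ d * e
        · by_cases h2 : d ∣ a
          · obtain ⟨b, rfl⟩ := h2
            exact absurd ⟨b, Finset.mem_coe.2 (Nat.mem_divisors.2
              ⟨Nat.dvd_of_mul_dvd_mul_left hdpos h1, hepos.ne'⟩), rfl⟩ ha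
          · simp [h2]
        · simp [h1]
      · intro b hb
        have hb' := Nat.dvd_of_mem_divisors hb
        simp [mul_dvd_mul_left d hb', Nat.mul_div_cancel_left b hdpos]
    rw [← key, sum_moebius_divisors]
    congr 1
    simp [hdpos.ne']
  · rw [if_neg (fun h : n = d => hdn (h ▸ dvd_rfl))]
    refine Finset.sum_eq_zero fun a _ => ?_
    by_cases h1 : a ∣ n
    · have h2 : ¬ d ∣ a := fun h => hdn (h.trans h1)
      simp [h2]
    · simp [h1]

lemma ramCC_eq_sum {r k : ℕ} (hr : r ≠ 0) (hk : k ∣ r) (n : ℕ) :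
    ramCC k n = ∑ a ∈ r.divisors,
      if a ∣ k ∧ a ∣ n then ((ArithmeticFunction.moebius (k / a) : ℤ) : ℂ) * a else 0 := by
  rw [ramCC, ← Finset.sum_filter]
  congr 1
  ext a
  have hk0 : k ≠ 0 := fun h => hr (by simpa [h] using hk)
  simp only [Nat.mem_divisors, Finset.mem_filter, Nat.dvd_gcd_iff]
  constructor
  · rintro ⟨h, -⟩
    exact ⟨⟨h.1.trans hk, hr⟩, h⟩
  · rintro ⟨-, h⟩
    exact ⟨h, Nat.gcd_ne_zero_left hk0⟩

/-- The matrix `c(d, n)` factors as `M * diag(a) * Zᵀ`. -/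
lemma ramCC_mat (r : ℕ) :
    (Matrix.of fun d n : r.divisors => ramCC d n) =
      moebMat r * Matrix.diagonal (fun a : r.divisors => ((a : ℕ) : ℂ)) * (zetaMat r).transpose := by
  ext ⟨d, hd⟩ ⟨n, hn⟩
  obtain ⟨hdr, hr⟩ := Nat.mem_divisors.1 hd
  rw [Matrix.mul_apply]
  simp only [Matrix.of_apply, Matrix.mul_diagonal, Matrix.transpose_apply, moebMat, zetaMat]
  rw [ramCC_eq_sum hr hdr, ← Finset.sum_coe_sort]
  refine Finset.sum_congr rfl fun a _ => ?_
  by_cases h1 : (a : ℕ) ∣ d <;> by_cases h2 : (a : ℕ) ∣ n <;> simp [h1, h2]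

/-- The matrix `c(r / δ, r / d)` factors as `Mᵀ * diag(r / b) * Z`; the substitution `b ↦ r / b`
reverses the divisor lattice. -/
lemma ramCC_div_mat (r : ℕ) :
    (Matrix.of fun δ d : r.divisors => ramCC (r / δ) (r / d)) =
      (moebMat r).transpose * Matrix.diagonal (fun b : r.divisors => ((r : ℂ) / ((b : ℕ) : ℂ))) *
        zetaMat r := by
  ext ⟨x, hx⟩ ⟨d, hd⟩
  obtain ⟨hxr, hr⟩ := Nat.mem_divisors.1 hx
  have hdr := Nat.dvd_of_mem_divisors hd
  rw [Matrix.mul_apply]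
  simp only [Matrix.of_apply, Matrix.mul_diagonal, Matrix.transpose_apply, moebMat, zetaMat]
  rw [ramCC_eq_sum hr (Nat.div_dvd_of_dvd hxr), ← Nat.sum_div_divisors, ← Finset.sum_coe_sort]
  refine Finset.sum_congr rfl fun b _ => ?_
  obtain ⟨b, hb⟩ := b
  have hbr := Nat.dvd_of_mem_divisors hb
  have hb0 : (b : ℂ) ≠ 0 := by exact_mod_cast (Nat.pos_of_mem_divisors hb).ne'
  have hdvd : ∀ y, y ∣ r → (r / b ∣ r / y ↔ y ∣ b) := fun y hy =>
    ⟨fun h => by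
      have hcast := Nat.div_dvd_div_left (Nat.div_dvd_of_dvd hy) h
      rwa [Nat.div_div_self hy hr, Nat.div_div_self hbr hr] at hcast,
     fun h => Nat.div_dvd_div_left hbr h⟩
  simp only [hdvd x hxr, hdvd d hdr]
  by_cases h1 : x ∣ b
  · have hq : r / x / (r / b) = b / x := by
      obtain ⟨u, rfl⟩ := h1
      obtain ⟨v, rfl⟩ := hbr
      have hx0 : 0 < x := Nat.pos_of_mem_divisors hx
      have hxu : 0 < x * u := Nat.pos_of_mem_divisors hb
      have hv : 0 < v := Nat.pos_of_ne_zero (right_ne_zero_of_mul hr)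
      rw [Nat.mul_div_cancel_left _ hxu, Nat.mul_div_cancel_left _ hx0, mul_assoc,
        Nat.mul_div_cancel_left _ hx0, Nat.mul_div_cancel _ hv]
    by_cases h2 : d ∣ b
    · simp [h1, h2, hq, Nat.cast_div hbr hb0]
    · simp [h2]
  · simp [h1]

lemma ram_mat_mul {r : ℕ} (hr : r ≠ 0) :
    (Matrix.of fun d n : r.divisors => ramCC d n) *
      (Matrix.of fun δ d : r.divisors => ramCC (r / δ) (r / d)) = (r : ℂ) • 1 := by
  have hZM := zetaMat_mul_moebMat r
  have hMZ : moebMat r * zetaMat r = 1 := mul_eq_one_comm.1 hZM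
  have hT : (zetaMat r).transpose * (moebMat r).transpose = 1 := by
    rw [← Matrix.transpose_mul, hMZ, Matrix.transpose_one]
  have hD : Matrix.diagonal (fun a : r.divisors => ((a : ℕ) : ℂ)) *
      Matrix.diagonal (fun b : r.divisors => ((r : ℂ) / ((b : ℕ) : ℂ))) = (r : ℂ) • 1 := by
    rw [Matrix.diagonal_mul_diagonal, Matrix.smul_one_eq_diagonal]
    congr 1
    ext a
    have ha0 : ((a : ℕ) : ℂ) ≠ 0 := by exact_mod_cast (Nat.pos_of_mem_divisors a.2).ne'
    field_simp
  rw [ramCC_mat, ramCC_div_mat]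
  generalize Matrix.diagonal (fun a : r.divisors => ((a : ℕ) : ℂ)) = A at *
  generalize Matrix.diagonal (fun b : r.divisors => ((r : ℂ) / ((b : ℕ) : ℂ))) = B at *
  calc _ = moebMat r * A * ((zetaMat r).transpose * (moebMat r).transpose) * B * zetaMat r := by
        simp only [Matrix.mul_assoc]
    _ = moebMat r * (A * B) * zetaMat r := by rw [hT]; simp only [Matrix.mul_assoc, Matrix.one_mul]
    _ = _ := by rw [hD]; simp [hMZ]

lemma ram_orth {r d e : ℕ} (hd : d ∈ r.divisors) (he : e ∈ r.divisors) :
    ∑ δ ∈ r.divisors, ramCC d δ * ramCC (r / δ) (r / e) = if d = e then (r : ℂ) else 0 := by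
  have h := congrFun (congrFun (ram_mat_mul (Nat.mem_divisors.1 hd).2) ⟨d, hd⟩) ⟨e, he⟩
  rw [Matrix.mul_apply] at h
  simp only [Matrix.of_apply, Matrix.smul_apply, Matrix.one_apply, Subtype.mk.injEq] at h
  rw [← Finset.sum_coe_sort, h]
  simp

lemma ram_orth' {r x n : ℕ} (hx : x ∈ r.divisors) (hn : n ∈ r.divisors) :
    ∑ d ∈ r.divisors, ramCC (r / x) (r / d) * ramCC d n = if x = n then (r : ℂ) else 0 := by
  have hr := (Nat.mem_divisors.1 hx).2
  have hr' : (r : ℂ) ≠ 0 := by exact_mod_cast hr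
  have h0 := ram_mat_mul hr
  -- A right inverse of a square matrix is a left inverse.
  have h1 : (Matrix.of fun δ d : r.divisors => ramCC (r / δ) (r / d)) *
      (Matrix.of fun d n : r.divisors => ramCC d n) = (r : ℂ) • 1 := by
    have h2 : ((r : ℂ)⁻¹ • (Matrix.of fun d n : r.divisors => ramCC d n)) *
        (Matrix.of fun δ d : r.divisors => ramCC (r / δ) (r / d)) = 1 := by
      rw [Matrix.smul_mul, h0, smul_smul, inv_mul_cancel₀ hr', one_smul]
    have h3 := mul_eq_one_comm.1 h2
    rw [Matrix.mul_smul] at h3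
    rw [← h3, smul_smul, mul_inv_cancel₀ hr', one_smul]
  have h := congrFun (congrFun h1 ⟨x, hx⟩) ⟨n, hn⟩
  rw [Matrix.mul_apply] at h
  simp only [Matrix.of_apply, Matrix.smul_apply, Matrix.one_apply, Subtype.mk.injEq] at h
  rw [← Finset.sum_coe_sort, h]
  simp

/-- Sums over tuples of divisors of a product of one-variable factors split; if the
one-variable sums are Kronecker deltas times `r j`, so is the whole, times `∏ r_j ^ k_j`. -/
lemma tuple_orth {m : ℕ} (r kk : Fin m → ℕ) (f g : ℕ → ℕ → ℕ → ℂ)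
    (x y : (j : Fin m) → Fin (kk j) → ℕ)
    (h : ∀ j l, ∑ t ∈ (r j).divisors, f (r j) (x j l) t * g (r j) t (y j l) =
      if x j l = y j l then (r j : ℂ) else 0) :
    ∑ t ∈ Fintype.piFinset (fun j => Fintype.piFinset fun _ : Fin (kk j) => (r j).divisors),
      (∏ j, ∏ l, f (r j) (x j l) (t j l)) * (∏ j, ∏ l, g (r j) (t j l) (y j l)) =
      if x = y then ∏ j, (r j : ℂ) ^ kk j else 0 := by
  simp only [← Finset.prod_mul_distrib]
  rw [← Finset.prod_univ_sum (fun j => Fintype.piFinset fun _ : Fin (kk j) => (r j).divisors)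
    (fun j t => ∏ l, f (r j) (x j l) (t l) * g (r j) (t l) (y j l))]
  have hj : ∀ j, ∑ t ∈ Fintype.piFinset (fun _ : Fin (kk j) => (r j).divisors),
      ∏ l, f (r j) (x j l) (t l) * g (r j) (t l) (y j l) =
      ∏ l, if x j l = y j l then (r j : ℂ) else 0 := fun j => by
    rw [← Finset.prod_univ_sum (fun _ : Fin (kk j) => (r j).divisors)
      (fun l t => f (r j) (x j l) t * g (r j) t (y j l))]
    exact Finset.prod_congr rfl fun l _ => h j l
  rw [Finset.prod_congr rfl fun j _ => hj j]
  split_ifs with hxy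
  · subst hxy
    simp
  · obtain ⟨j, hj⟩ := Function.ne_iff.1 hxy
    obtain ⟨l, hl⟩ := Function.ne_iff.1 hj
    exact Finset.prod_eq_zero (Finset.mem_univ j)
      (Finset.prod_eq_zero (Finset.mem_univ l) (if_neg hl))

lemma ramCC_gcd {r d : ℕ} (hd : d ∣ r) (n : ℕ) : ramCC d (Nat.gcd n r) = ramCC d n := by
  have : Nat.gcd d (Nat.gcd n r) = Nat.gcd d n := by
    rw [Nat.gcd_comm n r, ← Nat.gcd_assoc, Nat.gcd_eq_left hd]
  rw [ramCC, ramCC, this]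

/-- Lemma 4.4: `F(r; n_1,…,n_m)` (a function of tuples `n_j ∈ ℕ^{k_j}`) is even mod
`r^{(k)}` if and only if it admits a representation
`F(r;n_1,…,n_m) = ∑_{d_j ∣ r_j} α_r(d_1,…,d_m) ∏_{j,l} c(d_{j,l}, n_{j,l})`,
and in that case the coefficients are uniquely determined by
`α_r(d_1,…,d_m) = (r_1^{k_1}⋯r_m^{k_m})^{-1} ∑_{δ_j ∣ r_j} F(r;δ_1,…,δ_m)
  ∏_{j,l} c(r_j/δ_{j,l}, r_j/d_{j,l})`. -/
theorem stmt_16 (m : ℕ) (hm : 1 ≤ m) (r kk : Fin m → ℕ)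
    (hr : ∀ j, 0 < r j) (hk : ∀ j, 0 < kk j)
    (F : ((j : Fin m) → Fin (kk j) → ℕ) → ℂ) :
    ((∀ nn : (j : Fin m) → Fin (kk j) → ℕ, (∀ j l, 0 < nn j l) →
        F (fun j l => Nat.gcd (nn j l) (r j)) = F nn)
      ↔ ∃ α : ((j : Fin m) → Fin (kk j) → ℕ) → ℂ,
          ∀ nn : (j : Fin m) → Fin (kk j) → ℕ, (∀ j l, 0 < nn j l) →
            F nn = ∑ d ∈ Fintype.piFinset
                (fun j => Fintype.piFinset fun _ : Fin (kk j) => (r j).divisors),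
              α d * ∏ j : Fin m, ∏ l : Fin (kk j), ramCC (d j l) (nn j l))
    ∧
    (∀ α : ((j : Fin m) → Fin (kk j) → ℕ) → ℂ,
      (∀ nn : (j : Fin m) → Fin (kk j) → ℕ, (∀ j l, 0 < nn j l) →
        F nn = ∑ d ∈ Fintype.piFinset
            (fun j => Fintype.piFinset fun _ : Fin (kk j) => (r j).divisors),
          α d * ∏ j : Fin m, ∏ l : Fin (kk j), ramCC (d j l) (nn j l)) →
      ∀ d ∈ Fintype.piFinset
          (fun j => Fintype.piFinset fun _ : Fin (kk j) => (r j).divisors),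
        α d = (∏ j : Fin m, (r j : ℂ) ^ (kk j))⁻¹ *
          ∑ δ ∈ Fintype.piFinset
              (fun j => Fintype.piFinset fun _ : Fin (kk j) => (r j).divisors),
            F δ * ∏ j : Fin m, ∏ l : Fin (kk j),
              ramCC (r j / δ j l) (r j / d j l)) := by
  set S := Fintype.piFinset
    (fun j => Fintype.piFinset fun _ : Fin (kk j) => (r j).divisors) with hS
  have memS : ∀ d : (j : Fin m) → Fin (kk j) → ℕ, d ∈ S ↔ ∀ j l, d j l ∈ (r j).divisors := by
    intro d
    simp only [hS, Fintype.mem_piFinset]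
  have hR : (∏ j : Fin m, (r j : ℂ) ^ (kk j)) ≠ 0 :=
    Finset.prod_ne_zero_iff.2 fun j _ => pow_ne_zero _ (by exact_mod_cast (hr j).ne')
  have hgcd : ∀ d ∈ S, ∀ nn : (j : Fin m) → Fin (kk j) → ℕ,
      ∏ j : Fin m, ∏ l : Fin (kk j), ramCC (d j l) (Nat.gcd (nn j l) (r j)) =
        ∏ j : Fin m, ∏ l : Fin (kk j), ramCC (d j l) (nn j l) := fun d hd nn =>
    Finset.prod_congr rfl fun j _ => Finset.prod_congr rfl fun l _ =>
      ramCC_gcd (Nat.dvd_of_mem_divisors ((memS d).1 hd j l)) _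
  refine ⟨⟨fun hF => ?_, ?_⟩, ?_⟩
  · refine ⟨fun d => (∏ j : Fin m, (r j : ℂ) ^ (kk j))⁻¹ * ∑ δ ∈ S, F δ *
      ∏ j : Fin m, ∏ l : Fin (kk j), ramCC (r j / δ j l) (r j / d j l), fun nn _ => ?_⟩
    rw [← hF nn ‹_›]
    set g : (j : Fin m) → Fin (kk j) → ℕ := fun j l => Nat.gcd (nn j l) (r j) with hg
    have hgS : g ∈ S := (memS g).2 fun j l =>
      Nat.mem_divisors.2 ⟨Nat.gcd_dvd_right _ _, (hr j).ne'⟩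
    have hsum : ∀ δ ∈ S, ∑ d ∈ S,
        (∏ j : Fin m, ∏ l : Fin (kk j), ramCC (r j / δ j l) (r j / d j l)) *
          ∏ j : Fin m, ∏ l : Fin (kk j), ramCC (d j l) (g j l) =
        if δ = g then ∏ j : Fin m, (r j : ℂ) ^ (kk j) else 0 := fun δ hδ =>
      tuple_orth r kk (fun r x t => ramCC (r / x) (r / t)) (fun _ t y => ramCC t y) δ g
        fun j l => ram_orth' ((memS δ).1 hδ j l) ((memS g).1 hgS j l)
    symm
    calc _ = ∑ d ∈ S, ∑ δ ∈ S, (∏ j : Fin m, (r j : ℂ) ^ (kk j))⁻¹ * F δ *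
          ((∏ j : Fin m, ∏ l : Fin (kk j), ramCC (r j / δ j l) (r j / d j l)) *
            ∏ j : Fin m, ∏ l : Fin (kk j), ramCC (d j l) (g j l)) := by
          refine Finset.sum_congr rfl fun d hd => ?_
          beta_reduce
          rw [← hgcd d hd nn, Finset.mul_sum, Finset.sum_mul]
          exact Finset.sum_congr rfl fun δ _ => by ring
      _ = ∑ δ ∈ S, (∏ j : Fin m, (r j : ℂ) ^ (kk j))⁻¹ * F δ *
            if δ = g then ∏ j : Fin m, (r j : ℂ) ^ (kk j) else 0 := by
          rw [Finset.sum_comm]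
          refine Finset.sum_congr rfl fun δ hδ => ?_
          rw [← Finset.mul_sum, hsum δ hδ]
      _ = F g := by
          rw [Finset.sum_eq_single_of_mem g hgS fun b _ hb => by rw [if_neg hb, mul_zero],
            if_pos rfl]
          field_simp
  · rintro ⟨α, hα⟩ nn hnn
    rw [hα nn hnn, hα _ fun j l => Nat.gcd_pos_of_pos_right _ (hr j)]
    exact Finset.sum_congr rfl fun d hd => by rw [hgcd d hd nn]
  · intro α hα e he
    have hsum : ∀ d ∈ S, ∑ δ ∈ S,
        (∏ j : Fin m, ∏ l : Fin (kk j), ramCC (d j l) (δ j l)) *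
          ∏ j : Fin m, ∏ l : Fin (kk j), ramCC (r j / δ j l) (r j / e j l) =
        if d = e then ∏ j : Fin m, (r j : ℂ) ^ (kk j) else 0 := fun d hd =>
      tuple_orth r kk (fun _ x t => ramCC x t) (fun r t y => ramCC (r / t) (r / y)) d e
        fun j l => ram_orth ((memS d).1 hd j l) ((memS e).1 he j l)
    rw [eq_inv_mul_iff_mul_eq₀ hR]
    symm
    calc _ = ∑ δ ∈ S, ∑ d ∈ S, α d *
          ((∏ j : Fin m, ∏ l : Fin (kk j), ramCC (d j l) (δ j l)) *
            ∏ j : Fin m, ∏ l : Fin (kk j), ramCC (r j / δ j l) (r j / e j l)) := by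
          refine Finset.sum_congr rfl fun δ hδ => ?_
          rw [hα δ fun j l => Nat.pos_of_mem_divisors ((memS δ).1 hδ j l), Finset.sum_mul]
          exact Finset.sum_congr rfl fun d _ => by ring
      _ = ∑ d ∈ S, α d * if d = e then ∏ j : Fin m, (r j : ℂ) ^ (kk j) else 0 := by
          rw [Finset.sum_comm]
          refine Finset.sum_congr rfl fun d hd => ?_
          rw [← Finset.mul_sum, hsum d hd]
      _ = _ := by
          rw [Finset.sum_eq_single_of_mem e he fun b _ hb => by rw [if_neg hb, mul_zero],
            if_pos rfl, mul_comm]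
end

section
/- Let S = {x_1,…,x_n} be a factor-closed set of distinct positive integers, let r = (r_1,…,r_m), k = (k_1,…,k_m) ∈ ℕ^m, and let F(r; n_1,…,n_m) be even mod r^{(k)} for every r, with finite Fourier coefficients α_r. Define the (m+|k|)-dimensional matrix B of order n by B(i_1,…,i_{m+|k|}) := F(x_{i_1},…,x_{i_m}; (x_{i_{m+1}},…,x_{i_{m+k_1}}), …, (x_{i_{m+k_1+⋯+k_{m-1}+1}},…,x_{i_{m+|k|}})), where |k| = k_1+⋯+k_m. Let I ⊆ {1,…,m+|k|} have even cardinality and contain {m+1,…,m+|k|}, set ε_j = 1 if j ∈ I and 0 otherwise, and let Ĩ ⊆ {1,…,m} consist of those j with ε_j + k_j odd. Then det_I B = (x_1⋯x_n)^{|k|} · det_{Ĩ}( α_{x_{i_1},…,x_{i_m}}((x_{i_1},…,x_{i_1}),…,(x_{i_m},…,x_{i_m})) )_{1≤i_1,…,i_m≤n}, where in the j-th block the entry x_{i_j} is repeated k_j times. -/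
/-!
Fix the permutations `σ_1, …, σ_m` of the first `m` axes; the remaining `|k|` axes are all signed.
Multiplying each of these by the Möbius matrix `M(a,b) = μ(x_a / x_b)` (zero unless `x_b ∣ x_a`),
which has determinant one, does not change the alternating sum (`sum_mulAxes_of_det_eq_one`).
As the set is factor-closed, the new entries are the Möbius transforms of `F(r; ·)` in every
coordinate (`sum_moebiusMatrix`). Because `F` is even mod `r`, such a transform vanishes at `w`
unless each `w_{j,l}` divides `r_j` (`sum_moebiusMatrix_eq_zero`). A nonzero term therefore has
`x_{τ_{j,l}(v)} ∣ x_{σ_j(v)}` for all `v`, which forces `τ_{j,l} = σ_j` (`perm_eq_one_of_dvd`).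
The surviving term has sign `∏ sgn(σ_j)^{ε_j + k_j}`, and its entries are
`∏ r_j^{k_j} · α_r(r, …, r)` (`alphaHat_diag`).
-/


open scoped BigOperators

/-- The Cayley hyperdeterminant with signature `I` of a `k`-dimensional matrix of
order `n`, the `k` axes being indexed by the finite type `ι`:
`det_I A = (1/n!) ∑_{σ_1,…,σ_k ∈ S_n} ∏_{j∈I} sgn(σ_j) ∏_{v=1}^n A(σ_1(v),…,σ_k(v))`. -/
noncomputable def hypDet {ι : Type*} [Fintype ι] [DecidableEq ι] (n : ℕ)
    (I : Finset ι) (A : (ι → Fin n) → ℂ) : ℂ :=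
  ((n.factorial : ℂ))⁻¹ *
    ∑ σ : ι → Equiv.Perm (Fin n),
      (∏ j ∈ I, ((Equiv.Perm.sign (σ j) : ℤ) : ℂ)) * ∏ v : Fin n, A (fun j => σ j v)

/-- The finite Fourier coefficients of an even function mod `r^{(k)}`:
`α_r(d_1,…,d_m) = (r_1^{k_1}⋯r_m^{k_m})^{-1} ∑_{δ_j ∣ r_j} F(r;δ_1,…,δ_m)
  ∏_{j,l} c(r_j/δ_{j,l}, r_j/d_{j,l})`. -/
noncomputable def alphaHat (m : ℕ) (kk : Fin m → ℕ)
    (F : (Fin m → ℕ) → ((j : Fin m) → Fin (kk j) → ℕ) → ℂ)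
    (rr : Fin m → ℕ) (d : (j : Fin m) → Fin (kk j) → ℕ) : ℂ :=
  (∏ j : Fin m, (rr j : ℂ) ^ (kk j))⁻¹ *
    ∑ δ ∈ Fintype.piFinset
        (fun j => Fintype.piFinset fun _ : Fin (kk j) => (rr j).divisors),
      F rr δ * ∏ j : Fin m, ∏ l : Fin (kk j), ramCC (rr j / δ j l) (rr j / d j l)

/-- Since `x (π v) ≤ x v` for all `v` while both sides have the same sum, equality holds throughout. -/
lemma perm_eq_one_of_dvd {n : ℕ} {x : Fin n → ℕ} (hxpos : ∀ v, 0 < x v)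
    (hxinj : Function.Injective x) (π : Equiv.Perm (Fin n)) (h : ∀ v, x (π v) ∣ x v) :
    π = 1 := by
  have hle : ∀ v ∈ (Finset.univ : Finset (Fin n)), x (π v) ≤ x v :=
    fun v _ => Nat.le_of_dvd (hxpos v) (h v)
  have hsum : ∑ v, x (π v) = ∑ v, x v := Equiv.sum_comp π x
  have heq := (Finset.sum_eq_sum_iff_of_le hle).1 hsum
  ext v
  rw [hxinj (heq v (Finset.mem_univ v))]
  rfl

/-- Expansion of the alternating sum of a matrix whose axes have all been multiplied by `M`, as a
sum over arbitrary index families. The entry `A v` may depend on the position `v`, which accounts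
for further axes held fixed. -/
lemma sum_mulAxes {P : Type*} [Fintype P] [DecidableEq P] {n : ℕ}
    (M : Matrix (Fin n) (Fin n) ℂ) (A : Fin n → (P → Fin n) → ℂ) :
    ∑ τ : P → Equiv.Perm (Fin n), (∏ p, ((Equiv.Perm.sign (τ p) : ℤ) : ℂ)) *
        ∏ v, ∑ u : P → Fin n, (∏ p, M (τ p v) (u p)) * A v u
      = ∑ u : Fin n → P → Fin n,
          (∏ v, A v (u v)) * ∏ p, (M.submatrix id (fun v => u v p)).det := by
  simp only [Matrix.det_apply', Finset.prod_univ_sum, Fintype.piFinset_univ, Finset.mul_sum]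
  rw [Finset.sum_comm]
  refine Finset.sum_congr rfl fun u _ => Finset.sum_congr rfl fun τ _ => ?_
  simp only [Finset.prod_mul_distrib, Matrix.submatrix_apply, id]
  rw [Finset.prod_comm]
  ring

/-- Multiplying every signed axis by a matrix of determinant one leaves the alternating sum
unchanged: in the expansion `sum_mulAxes` the determinants of the column selections of `M` agree
with those of the identity matrix, and the identity matrix changes nothing. -/
lemma sum_mulAxes_of_det_eq_one {P : Type*} [Fintype P] [DecidableEq P] {n : ℕ}
    (M : Matrix (Fin n) (Fin n) ℂ) (hM : M.det = 1) (A : Fin n → (P → Fin n) → ℂ) :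
    ∑ τ : P → Equiv.Perm (Fin n), (∏ p, ((Equiv.Perm.sign (τ p) : ℤ) : ℂ)) *
        ∏ v, ∑ u : P → Fin n, (∏ p, M (τ p v) (u p)) * A v u
      = ∑ τ : P → Equiv.Perm (Fin n), (∏ p, ((Equiv.Perm.sign (τ p) : ℤ) : ℂ)) *
        ∏ v, A v (fun p => τ p v) := by
  have hone : ∀ (w : P → Fin n) (v : Fin n),
      ∑ u : P → Fin n, (∏ p, (1 : Matrix (Fin n) (Fin n) ℂ) (w p) (u p)) * A v u = A v w := by
    intro w v
    rw [Finset.sum_eq_single w]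
    · simp
    · intro u _ hu
      obtain ⟨p, hp⟩ := Function.ne_iff.1 hu
      rw [Finset.prod_eq_zero (Finset.mem_univ p), zero_mul]
      exact Matrix.one_apply_ne (Ne.symm hp)
    · simp
  have h1 := sum_mulAxes (1 : Matrix (Fin n) (Fin n) ℂ) A
  simp only [hone] at h1
  rw [h1, sum_mulAxes]
  refine Finset.sum_congr rfl fun u _ => ?_
  congr 1
  refine Finset.prod_congr rfl fun p _ => ?_
  have : M.submatrix id (fun v => u v p)
      = M * (1 : Matrix (Fin n) (Fin n) ℂ).submatrix id (fun v => u v p) := by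
    ext a b
    simp [Matrix.mul_apply, Matrix.one_apply]
  rw [this, Matrix.det_mul, hM, one_mul]

/-- The Möbius matrix of the divisibility order on `{x_1, …, x_n}`. -/
noncomputable def moebiusMatrix {n : ℕ} (x : Fin n → ℕ) : Matrix (Fin n) (Fin n) ℂ :=
  fun a b => if x b ∣ x a then ((ArithmeticFunction.moebius (x a / x b) : ℤ) : ℂ) else 0

/-- The only permutation contributing to the determinant is the identity, by
`perm_eq_one_of_dvd`. -/
lemma moebiusMatrix_det {n : ℕ} {x : Fin n → ℕ} (hxpos : ∀ v, 0 < x v)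
    (hxinj : Function.Injective x) : (moebiusMatrix x).det = 1 := by
  rw [Matrix.det_apply', Finset.sum_eq_single 1]
  · simp [moebiusMatrix, Nat.div_self (hxpos _)]
  · intro σ _ hσ
    have : ∃ v, ¬ x v ∣ x (σ v) := by
      by_contra! h
      apply hσ
      have := perm_eq_one_of_dvd hxpos hxinj σ⁻¹ (fun v => by simpa using h (σ⁻¹ v))
      simpa using this
    obtain ⟨v, hv⟩ := this
    rw [Finset.prod_eq_zero (Finset.mem_univ v), mul_zero]
    simp [moebiusMatrix, hv]
  · simp

/-- Factor-closedness turns the sum over indices into the full Möbius transform, a sum over all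
divisors in each coordinate. -/
lemma sum_moebiusMatrix {P : Type*} [Fintype P] [DecidableEq P] {n : ℕ} {x : Fin n → ℕ}
    (hxpos : ∀ v, 0 < x v) (hxinj : Function.Injective x)
    (hfc : ∀ v : Fin n, ∀ d : ℕ, d ∣ x v → ∃ w : Fin n, x w = d)
    (w : P → Fin n) (Φ : (P → ℕ) → ℂ) :
    ∑ u : P → Fin n, (∏ p, moebiusMatrix x (w p) (u p)) * Φ (fun p => x (u p))
      = ∑ δ ∈ Fintype.piFinset fun p => (x (w p)).divisors,
          (∏ p, ((ArithmeticFunction.moebius (x (w p) / δ p) : ℤ) : ℂ)) * Φ δ := by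
  rw [← Finset.sum_subset (Finset.subset_univ
    (Finset.univ.filter fun u : P → Fin n => ∀ p, x (u p) ∣ x (w p)))]
  · refine Finset.sum_bij (fun u _ p => x (u p)) ?_ ?_ ?_ ?_
    · intro u hu
      simp only [Finset.mem_filter, Finset.mem_univ, true_and] at hu
      simpa [Fintype.mem_piFinset, (hxpos _).ne'] using hu
    · intro u _ u' _ h
      exact funext fun p => hxinj (congrFun h p)
    · intro δ hδ
      have hd : ∀ p, δ p ∣ x (w p) := fun p =>
        Nat.dvd_of_mem_divisors (Fintype.mem_piFinset.1 hδ p)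
      choose u hu using fun p => hfc (w p) (δ p) (hd p)
      exact ⟨u, by simpa [hu] using hd, funext hu⟩
    · intro u hu
      simp only [Finset.mem_filter, Finset.mem_univ, true_and] at hu
      simp [moebiusMatrix, hu]
  · intro u _ hu
    simp only [Finset.mem_filter, Finset.mem_univ, true_and, not_forall] at hu
    obtain ⟨p, hp⟩ := hu
    rw [Finset.prod_eq_zero (Finset.mem_univ p), zero_mul]
    simp [moebiusMatrix, hp]

/-- The Möbius transform of an even function mod `r` vanishes at non-divisors of `r`: with `h`
denoting the transform of `f`, evenness says that `h` and its restriction to the divisors of `r`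
have the same divisor sums, so they coincide. -/
lemma sum_moebius_eq_zero {f : ℕ → ℂ} {r : ℕ}
    (hf : ∀ d, 0 < d → f (Nat.gcd d r) = f d) {w : ℕ} (hw : 0 < w) (hwr : ¬ w ∣ r) :
    ∑ δ ∈ w.divisors, ((ArithmeticFunction.moebius (w / δ) : ℤ) : ℂ) * f δ = 0 := by
  set h : ℕ → ℂ := fun a =>
    ∑ y ∈ a.divisorsAntidiagonal, ((ArithmeticFunction.moebius y.1 : ℤ) : ℂ) * f y.2 with hh
  have hsum : ∀ a > 0, ∑ i ∈ a.divisors, h i = f a :=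
    ArithmeticFunction.sum_eq_iff_sum_mul_moebius_eq.2 fun _ _ => rfl
  have hsum' : ∀ a > 0, ∑ i ∈ a.divisors, (if i ∣ r then h i else 0) = f a := by
    intro a ha
    rw [← hf a ha, ← hsum _ (Nat.gcd_pos_of_pos_left _ ha), ← Finset.sum_filter]
    refine Finset.sum_congr ?_ fun _ _ => rfl
    ext i
    simp [Nat.dvd_gcd_iff, ha.ne']
  have key := ArithmeticFunction.sum_eq_iff_sum_mul_moebius_eq.1 hsum' w hw
  rw [if_neg hwr] at key
  rw [← key, Nat.sum_divisorsAntidiagonal'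
    (fun a b => ((ArithmeticFunction.moebius a : ℤ) : ℂ) * f b)]

/-- The multivariable form of `sum_moebius_eq_zero`: one coordinate that fails to divide suffices,
as the sum over that coordinate already vanishes. -/
lemma sum_moebiusMatrix_eq_zero {P : Type*} [Fintype P] [DecidableEq P] {n : ℕ} {x : Fin n → ℕ}
    (hxpos : ∀ v, 0 < x v) (hxinj : Function.Injective x)
    (hfc : ∀ v : Fin n, ∀ d : ℕ, d ∣ x v → ∃ w : Fin n, x w = d)
    (w : P → Fin n) (Φ : (P → ℕ) → ℂ) (r : P → ℕ)
    (hΦ : ∀ y : P → ℕ, (∀ p, 0 < y p) → Φ (fun p => Nat.gcd (y p) (r p)) = Φ y)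
    (p₀ : P) (hp : ¬ x (w p₀) ∣ r p₀) :
    ∑ u : P → Fin n, (∏ p, moebiusMatrix x (w p) (u p)) * Φ (fun p => x (u p)) = 0 := by
  rw [← (Equiv.funSplitAt p₀ (Fin n)).symm.sum_comp, Fintype.sum_prod_type_right]
  refine Finset.sum_eq_zero fun u' _ => ?_
  -- `y d` has entry `d` at `p₀`, the other coordinates being frozen.
  set y : ℕ → P → ℕ := fun d p => if hpp : p = p₀ then d else x (u' ⟨p, hpp⟩) with hy
  have hypos : ∀ d, 0 < d → ∀ p, 0 < y d p := by
    intro d hd p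
    simp only [hy]
    split_ifs
    exacts [hd, hxpos _]
  have hz : ∑ δ ∈ (x (w p₀)).divisors,
      ((ArithmeticFunction.moebius (x (w p₀) / δ) : ℤ) : ℂ) * Φ (y δ) = 0 := by
    refine sum_moebius_eq_zero (f := fun d => Φ (y d)) ?_ (hxpos _) hp
    intro d hd
    rw [← hΦ _ (hypos d hd), ← hΦ _ (hypos _ (Nat.gcd_pos_of_pos_left _ hd))]
    congr 1
    ext p
    by_cases hpp : p = p₀
    · subst hpp
      simp [hy]
    · simp [hy, hpp]
  have hz' : ∑ a : Fin n, moebiusMatrix x (w p₀) a * Φ (y (x a)) = 0 := by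
    have himg : (x (w p₀)).divisors
        = (Finset.univ.filter fun a => x a ∣ x (w p₀)).image x := by
      ext d
      simp only [Nat.mem_divisors, Finset.mem_image, Finset.mem_filter, Finset.mem_univ,
        true_and]
      constructor
      · rintro ⟨hd, -⟩
        obtain ⟨a, rfl⟩ := hfc _ _ hd
        exact ⟨a, hd, rfl⟩
      · rintro ⟨a, ha, rfl⟩
        exact ⟨ha, (hxpos _).ne'⟩
    rw [himg, Finset.sum_image hxinj.injOn, Finset.sum_filter] at hz
    simpa [moebiusMatrix] using hz
  calc _ = ∑ a : Fin n, (∏ p : {p // p ≠ p₀}, moebiusMatrix x (w p) (u' p)) *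
        (moebiusMatrix x (w p₀) a * Φ (y (x a))) := by
        refine Finset.sum_congr rfl fun a _ => ?_
        rw [Fintype.prod_eq_mul_prod_subtype_ne _ p₀, mul_comm (moebiusMatrix x (w p₀) _),
          mul_assoc]
        congr 1
        · refine Finset.prod_congr rfl fun p _ => ?_
          simp [p.2]
        · congr 1
          · simp
          · congr 1
            ext p
            by_cases hpp : p = p₀ <;> simp [hy, hpp]
    _ = 0 := by rw [← Finset.mul_sum, hz', mul_zero]

/-- At `d = r` the Ramanujan sums are `c(r/δ, 1) = μ(r/δ)`, so the Fourier coefficient is, up to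
the factor `∏ r_j ^ k_j`, the Möbius transform of `F`. -/
lemma alphaHat_diag {m : ℕ} {kk : Fin m → ℕ}
    (F : (Fin m → ℕ) → ((j : Fin m) → Fin (kk j) → ℕ) → ℂ)
    (rr : Fin m → ℕ) (hrr : ∀ j, 0 < rr j) :
    (∏ j, (rr j : ℂ) ^ kk j) * alphaHat m kk F rr (fun j _ => rr j)
      = ∑ δ ∈ Fintype.piFinset fun p : (j : Fin m) × Fin (kk j) => (rr p.1).divisors,
          (∏ p, ((ArithmeticFunction.moebius (rr p.1 / δ p) : ℤ) : ℂ)) *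
            F rr (fun j l => δ ⟨j, l⟩) := by
  have hne : (∏ j, (rr j : ℂ) ^ kk j) ≠ 0 :=
    Finset.prod_ne_zero_iff.2 fun j _ => pow_ne_zero _ (by exact_mod_cast (hrr j).ne')
  rw [alphaHat, mul_inv_cancel_left₀ hne]
  refine Finset.sum_bij' (fun δ _ p => δ p.1 p.2) (fun δ _ j l => δ ⟨j, l⟩) ?_ ?_ ?_ ?_ ?_
  · intro δ hδ
    simp only [Fintype.mem_piFinset] at hδ ⊢
    exact fun p => hδ p.1 p.2
  · intro δ hδ
    simp only [Fintype.mem_piFinset] at hδ ⊢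
    exact fun j l => hδ ⟨j, l⟩
  · intros; rfl
  · intros; rfl
  · intro δ _
    rw [Fintype.prod_sigma, mul_comm]
    simp [ramCC, Nat.div_self (hrr _)]

lemma sign_pow_mul_sign_pow {n : ℕ} (π : Equiv.Perm (Fin n)) (e k : ℕ) :
    ((Equiv.Perm.sign π : ℤ) : ℂ) ^ e * ((Equiv.Perm.sign π : ℤ) : ℂ) ^ k
      = if (e + k) % 2 = 1 then ((Equiv.Perm.sign π : ℤ) : ℂ) else 1 := by
  rw [← pow_add]
  rcases Int.units_eq_one_or (Equiv.Perm.sign π) with h | h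
  · simp [h]
  · rw [h]
    split_ifs with hc
    · simpa using (Nat.odd_iff.2 hc).neg_one_pow
    · simpa using (Nat.even_iff.2 (by omega)).neg_one_pow

/-- Proposition 4.5: for a factor-closed set `S = {x_1,…,x_n}` and `F` even mod
`r^{(k)}` (for every `r`), the `(m+|k|)`-dimensional matrix
`B(i_1,…,i_{m+|k|}) = F(x_{i_1},…,x_{i_m}; x_{i_{m+1}},…,x_{i_{m+|k|}})` satisfies
`det_I B = (x_1⋯x_n)^{|k|} det_{Ĩ}(α_{x_{i_1},…,x_{i_m}}(x_{i_1},…,x_{i_1},…,x_{i_m},…,x_{i_m}))`,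
where `I` has even cardinality and contains all of the last `|k|` positions, and
`Ĩ = {j : ε_j + k_j  odd}`.  The `m + |k|` axes are indexed by
`Fin m ⊕ (Σ j, Fin (kk j))`, block `(j,l)` being position `m+k_1+⋯+k_{j-1}+l`. -/
theorem stmt_17 (n : ℕ) (hn : 0 < n) (x : Fin n → ℕ)
    (hxpos : ∀ v, 0 < x v) (hxinj : Function.Injective x)
    (hfc : ∀ v : Fin n, ∀ d : ℕ, d ∣ x v → ∃ w : Fin n, x w = d)
    (m : ℕ) (hm : 1 ≤ m) (kk : Fin m → ℕ) (hk : ∀ j, 0 < kk j)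
    (F : (Fin m → ℕ) → ((j : Fin m) → Fin (kk j) → ℕ) → ℂ)
    (heven : ∀ rr : Fin m → ℕ, (∀ j, 0 < rr j) →
      ∀ nn : (j : Fin m) → Fin (kk j) → ℕ, (∀ j l, 0 < nn j l) →
        F rr (fun j l => Nat.gcd (nn j l) (rr j)) = F rr nn)
    (I : Finset (Fin m ⊕ ((j : Fin m) × Fin (kk j))))
    (hIcard : Even I.card)
    (hIcont : ∀ p : (j : Fin m) × Fin (kk j), Sum.inr p ∈ I) :
    hypDet n I (fun idx => F (fun j => x (idx (Sum.inl j)))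
        (fun j l => x (idx (Sum.inr ⟨j, l⟩))))
      = (∏ v : Fin n, (x v : ℂ)) ^ (∑ j : Fin m, kk j) *
          hypDet n
            (Finset.univ.filter fun j : Fin m =>
              ((if Sum.inl j ∈ I then 1 else 0) + kk j) % 2 = 1)
            (fun i : Fin m → Fin n =>
              alphaHat m kk F (fun j => x (i j)) (fun j _ => x (i j))) := by
  unfold hypDet
  rw [mul_left_comm]
  congr 1
  rw [← (Equiv.sumArrowEquivProdArrow _ _ _).symm.sum_comp, Fintype.sum_prod_type,
    Finset.mul_sum]
  refine Finset.sum_congr rfl fun σ _ => ?_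
  set Φ : Fin n → (((j : Fin m) × Fin (kk j)) → ℕ) → ℂ :=
    fun v y => F (fun j => x (σ j v)) (fun j l => y ⟨j, l⟩) with hΦ
  -- All axes of the blocks are signed, so their signs split off without exponents.
  have hsplit : ∀ τ : ((j : Fin m) × Fin (kk j)) → Equiv.Perm (Fin n),
      (∏ q ∈ I, ((Equiv.Perm.sign
          ((Equiv.sumArrowEquivProdArrow _ _ _).symm (σ, τ) q) : ℤ) : ℂ))
        = (∏ j, ((Equiv.Perm.sign (σ j) : ℤ) : ℂ) ^ (if Sum.inl j ∈ I then 1 else 0)) *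
          ∏ p, ((Equiv.Perm.sign (τ p) : ℤ) : ℂ) := by
    intro τ
    rw [← Finset.prod_ite_mem_eq, Fintype.prod_sum_type]
    congr 1
    · refine Finset.prod_congr rfl fun j _ => ?_
      split_ifs <;> simp
    · refine Finset.prod_congr rfl fun p _ => ?_
      rw [if_pos (hIcont p)]
      rfl
  have hsum : ∑ τ : ((j : Fin m) × Fin (kk j)) → Equiv.Perm (Fin n), (∏ p, ((Equiv.Perm.sign (τ p) : ℤ) : ℂ)) *
        ∏ v, Φ v (fun p => x (τ p v))
      = (∏ j, ((Equiv.Perm.sign (σ j) : ℤ) : ℂ) ^ kk j) *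
        ((∏ v, (x v : ℂ)) ^ (∑ j, kk j) *
          ∏ v, alphaHat m kk F (fun j => x (σ j v)) (fun j _ => x (σ j v))) := by
    rw [← sum_mulAxes_of_det_eq_one (moebiusMatrix x) (moebiusMatrix_det hxpos hxinj)
      (fun v u => Φ v (fun p => x (u p))),
      Finset.sum_eq_single (fun p : ((j : Fin m) × Fin (kk j)) => σ p.1)]
    -- The surviving term: every axis of block `j` is permuted by `σ j`.
    · congr 1
      · rw [Fintype.prod_sigma]
        simp
      · have hdiag : ∀ v, ∑ u : ((j : Fin m) × Fin (kk j)) → Fin n, (∏ p : ((j : Fin m) × Fin (kk j)), moebiusMatrix x (σ p.1 v) (u p)) *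
              Φ v (fun p => x (u p))
            = (∏ j, (x (σ j v) : ℂ) ^ kk j) *
              alphaHat m kk F (fun j => x (σ j v)) (fun j _ => x (σ j v)) := by
          intro v
          rw [alphaHat_diag F _ (fun j => hxpos _)]
          exact sum_moebiusMatrix hxpos hxinj hfc (fun p : ((j : Fin m) × Fin (kk j)) => σ p.1 v) (Φ v)
        simp only [hdiag, Finset.prod_mul_distrib]
        congr 1
        rw [Finset.prod_comm, ← Finset.prod_pow_eq_pow_sum]
        refine Finset.prod_congr rfl fun j _ => ?_
        rw [Finset.prod_pow, Equiv.prod_comp (σ j) (fun v => (x v : ℂ))]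
    · intro τ _ hτ
      have hex : ∃ (p : ((j : Fin m) × Fin (kk j))) (v : Fin n), ¬ x (τ p v) ∣ x (σ p.1 v) := by
        by_contra! h
        apply hτ
        funext p
        have := perm_eq_one_of_dvd hxpos hxinj (τ p * (σ p.1)⁻¹)
          (fun v => by simpa using h p ((σ p.1)⁻¹ v))
        exact mul_inv_eq_one.1 this
      obtain ⟨p, v, hpv⟩ := hex
      rw [Finset.prod_eq_zero (Finset.mem_univ v), mul_zero]
      exact sum_moebiusMatrix_eq_zero hxpos hxinj hfc (fun p => τ p v) (Φ v)
        (fun p => x (σ p.1 v))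
        (fun y hy => heven _ (fun _ => hxpos _) (fun j l => y ⟨j, l⟩) (fun j l => hy ⟨j, l⟩))
        p hpv
    · simp
  simp only [hsplit, mul_assoc]
  rw [← Finset.mul_sum]
  refine (congrArg _ hsum).trans ?_
  rw [← mul_assoc, ← Finset.prod_mul_distrib]
  simp only [sign_pow_mul_sign_pow, ← Finset.prod_filter]
  ring
end
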